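/- arXiv:2005.12063 — 3 statements merged into one kernel-verified Lean document; each statement's English description precedes it below -/
import Mathlib

section
/- If K₁ and K₂ are disjoint compact subsets of ℂⁿ such that K₁ ∪ K₂ is polynomially convex, then for any compact polynomially convex subset K₁' ⊆ K₁, the union K₁' ∪ K₂ is also polynomially convex. -/
noncomputable section
open Set Metric MvPolynomial

/-- The polynomially convex hull of a set in `ℂⁿ`. -/
def polyHull {n : ℕ} (K : Set (EuclideanSpace ℂ (Fin n))) : Set (EuclideanSpace ℂ (Fin n)) :=
  {z | ∀ p : MvPolynomial (Fin n) ℂ,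
    ‖eval (fun i => z i) p‖ ≤ sSup ((fun w => ‖eval (fun i => w i) p‖) '' K)}

/-- A compact set in `ℂⁿ` is polynomially convex if it equals its polynomial hull. -/
def IsPolyConvex {n : ℕ} (K : Set (EuclideanSpace ℂ (Fin n))) : Prop :=
  polyHull K = K

/-- Polynomial hull for subsets of a product `ℂᴺ × ℂⁿ ≅ ℂ^{N+n}`, using polynomials in the
`N + n` coordinates. -/
def polyHull2 {N n : ℕ} (S : Set (EuclideanSpace ℂ (Fin N) × EuclideanSpace ℂ (Fin n))) :
    Set (EuclideanSpace ℂ (Fin N) × EuclideanSpace ℂ (Fin n)) :=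
  {z | ∀ p : MvPolynomial (Fin N ⊕ Fin n) ℂ,
    ‖eval (Sum.elim (fun i => z.1 i) (fun j => z.2 j)) p‖ ≤
      sSup ((fun w => ‖eval (Sum.elim (fun i => w.1 i) (fun j => w.2 j)) p‖) '' S)}

def IsPolyConvex2 {N n : ℕ} (S : Set (EuclideanSpace ℂ (Fin N) × EuclideanSpace ℂ (Fin n))) :
    Prop :=
  polyHull2 S = S

/-- The weight `k ↦ p ^ k` for `k ≥ 0` and `k ↦ q ^ (-k)` for `k ≤ 0`. -/
def annulusWeight (p q : Ici (1 : ℝ)) (k : ℤ) : ℝ := (p : ℝ) ^ k.toNat * (q : ℝ) ^ (-k).toNat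

lemma one_le_annulusWeight (p q : Ici (1 : ℝ)) (k : ℤ) : 1 ≤ annulusWeight p q k :=
  one_le_mul_of_one_le_of_one_le (one_le_pow₀ p.2) (one_le_pow₀ q.2)

lemma annulusWeight_pos (p q : Ici (1 : ℝ)) (k : ℤ) : 0 < annulusWeight p q k :=
  one_pos.trans_le (one_le_annulusWeight p q k)

lemma annulusWeight_zero (p q : Ici (1 : ℝ)) : annulusWeight p q 0 = 1 := by
  simp [annulusWeight]

lemma annulusWeight_add_le (p q : Ici (1 : ℝ)) (k l : ℤ) :
    annulusWeight p q (k + l) ≤ annulusWeight p q k * annulusWeight p q l := by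
  have hp : (p : ℝ) ^ (k + l).toNat ≤ (p : ℝ) ^ k.toNat * (p : ℝ) ^ l.toNat := by
    rw [← pow_add]
    exact pow_le_pow_right₀ p.2 (by omega)
  have hq : (q : ℝ) ^ (-(k + l)).toNat ≤ (q : ℝ) ^ (-k).toNat * (q : ℝ) ^ (-l).toNat := by
    rw [← pow_add]
    exact pow_le_pow_right₀ q.2 (by omega)
  have hp0 : (0 : ℝ) ≤ p := zero_le_one.trans p.2
  have hq0 : (0 : ℝ) ≤ q := zero_le_one.trans q.2
  calc annulusWeight p q (k + l)
      ≤ ((p : ℝ) ^ k.toNat * (p : ℝ) ^ l.toNat) * ((q : ℝ) ^ (-k).toNat * (q : ℝ) ^ (-l).toNat) :=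
        mul_le_mul hp hq (by positivity) (by positivity)
    _ = annulusWeight p q k * annulusWeight p q l := by unfold annulusWeight; ring

/-- Absolutely convergent Laurent series with coefficients in `S` on the annulus
`q⁻¹ ≤ |w| ≤ p`. -/
structure LaurentAlg (p q : Ici (1 : ℝ)) (S : Type) [NormedCommRing S] where
  /-- The coefficients of the series. -/
  coeff : ℤ → S
  summable' : Summable fun k => annulusWeight p q k * ‖coeff k‖

namespace LaurentAlg

variable {p q p' q' : Ici (1 : ℝ)} {S : Type} [NormedCommRing S]

@[ext] lemma ext {a b : LaurentAlg p q S} (h : ∀ k, a.coeff k = b.coeff k) : a = b := by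
  cases a; cases b; congr; exact funext h

lemma coeff_injective : Function.Injective (coeff : LaurentAlg p q S → ℤ → S) :=
  fun _ _ h => ext (congrFun h)

lemma summable_norm (a : LaurentAlg p q S) : Summable fun k => ‖a.coeff k‖ :=
  a.summable'.of_nonneg_of_le (fun _ => norm_nonneg _) fun k =>
    le_mul_of_one_le_left (norm_nonneg _) (one_le_annulusWeight p q k)

instance : Zero (LaurentAlg p q S) := ⟨⟨0, by simp⟩⟩

instance : Add (LaurentAlg p q S) :=
  ⟨fun a b => ⟨a.coeff + b.coeff, (a.summable'.add b.summable').of_nonneg_of_le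
    (fun k => mul_nonneg (annulusWeight_pos p q k).le (norm_nonneg _)) fun k => by
      rw [← mul_add]
      exact mul_le_mul_of_nonneg_left (norm_add_le _ _) (annulusWeight_pos p q k).le⟩⟩

instance : Neg (LaurentAlg p q S) := ⟨fun a => ⟨-a.coeff, by simpa using a.summable'⟩⟩

instance : Sub (LaurentAlg p q S) :=
  ⟨fun a b => ⟨a.coeff - b.coeff, by rw [sub_eq_add_neg]; exact (a + -b).summable'⟩⟩

instance : SMul ℕ (LaurentAlg p q S) :=
  ⟨fun n a => ⟨n • a.coeff, (a.summable'.mul_left (n : ℝ)).of_nonneg_of_le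
    (fun k => mul_nonneg (annulusWeight_pos p q k).le (norm_nonneg _)) fun k => by
      rw [mul_left_comm]
      exact mul_le_mul_of_nonneg_left (norm_nsmul_le) (annulusWeight_pos p q k).le⟩⟩

instance : SMul ℤ (LaurentAlg p q S) :=
  ⟨fun n a => ⟨n • a.coeff, (a.summable'.mul_left ‖n‖).of_nonneg_of_le
    (fun k => mul_nonneg (annulusWeight_pos p q k).le (norm_nonneg _)) fun k => by
      rw [mul_left_comm]
      exact mul_le_mul_of_nonneg_left (norm_zsmul_le _ _) (annulusWeight_pos p q k).le⟩⟩

instance : AddCommGroup (LaurentAlg p q S) :=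
  coeff_injective.addCommGroup coeff rfl (fun _ _ => rfl) (fun _ => rfl) (fun _ _ => rfl)
    (fun _ _ => rfl) (fun _ _ => rfl)

@[simp] lemma coeff_add (a b : LaurentAlg p q S) (k : ℤ) :
    (a + b).coeff k = a.coeff k + b.coeff k := rfl

@[simp] lemma coeff_zero (k : ℤ) : (0 : LaurentAlg p q S).coeff k = 0 := rfl

/-- The bijection `(n, k) ↦ (k, n - k)`. -/
def convEquiv : ℤ × ℤ ≃ ℤ × ℤ where
  toFun x := (x.2, x.1 - x.2)
  invFun y := (y.1 + y.2, y.1)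
  left_inv x := by simp
  right_inv y := by simp

lemma summable_conv {f g : ℤ → ℝ} (hf : Summable f) (hg : Summable g) (hf0 : ∀ k, 0 ≤ f k)
    (hg0 : ∀ k, 0 ≤ g k) : Summable fun x : ℤ × ℤ => f x.2 * g (x.1 - x.2) :=
  convEquiv.summable_iff.2 (hf.mul_of_nonneg hg hf0 hg0)

lemma weighted_nonneg (a : LaurentAlg p q S) (k : ℤ) :
    0 ≤ annulusWeight p q k * ‖a.coeff k‖ :=
  mul_nonneg (annulusWeight_pos p q k).le (norm_nonneg _)

lemma summable_weighted_conv (a b : LaurentAlg p q S) : Summable fun x : ℤ × ℤ =>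
    annulusWeight p q x.2 * ‖a.coeff x.2‖ *
      (annulusWeight p q (x.1 - x.2) * ‖b.coeff (x.1 - x.2)‖) :=
  summable_conv (f := fun k => annulusWeight p q k * ‖a.coeff k‖)
    (g := fun k => annulusWeight p q k * ‖b.coeff k‖) a.summable' b.summable' a.weighted_nonneg
    b.weighted_nonneg

lemma summable_norm_conv (a b : LaurentAlg p q S) : Summable fun x : ℤ × ℤ =>
    ‖a.coeff x.2‖ * ‖b.coeff (x.1 - x.2)‖ :=
  summable_conv (f := fun k => ‖a.coeff k‖) (g := fun k => ‖b.coeff k‖) a.summable_norm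
    b.summable_norm (fun _ => norm_nonneg _) fun _ => norm_nonneg _

lemma summable_norm_coeff_mul (a b : LaurentAlg p q S) (n : ℤ) :
    Summable fun k => ‖a.coeff k * b.coeff (n - k)‖ :=
  ((summable_norm_conv a b).prod_factor n).of_nonneg_of_le (fun _ => norm_nonneg _)
    fun _ => norm_mul_le _ _

lemma weight_mul_norm_tsum_le (a b : LaurentAlg p q S) (n : ℤ) :
    annulusWeight p q n * ‖∑' k, a.coeff k * b.coeff (n - k)‖ ≤
      ∑' k, annulusWeight p q k * ‖a.coeff k‖ *
        (annulusWeight p q (n - k) * ‖b.coeff (n - k)‖) := by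
  calc annulusWeight p q n * ‖∑' k, a.coeff k * b.coeff (n - k)‖
      ≤ annulusWeight p q n * ∑' k, ‖a.coeff k * b.coeff (n - k)‖ :=
        mul_le_mul_of_nonneg_left (norm_tsum_le_tsum_norm (summable_norm_coeff_mul a b n))
          (annulusWeight_pos p q n).le
    _ = ∑' k, annulusWeight p q n * ‖a.coeff k * b.coeff (n - k)‖ := tsum_mul_left.symm
    _ ≤ _ := by
      refine ((summable_norm_coeff_mul a b n).mul_left _).tsum_le_tsum (fun k => ?_)
        ((summable_weighted_conv a b).prod_factor n)
      have h := annulusWeight_add_le p q k (n - k)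
      rw [add_sub_cancel] at h
      calc annulusWeight p q n * ‖a.coeff k * b.coeff (n - k)‖
          ≤ (annulusWeight p q k * annulusWeight p q (n - k)) *
              (‖a.coeff k‖ * ‖b.coeff (n - k)‖) :=
            mul_le_mul h (norm_mul_le _ _) (norm_nonneg _)
              (mul_pos (annulusWeight_pos _ _ _) (annulusWeight_pos _ _ _)).le
        _ = _ := by ring

instance : Mul (LaurentAlg p q S) :=
  ⟨fun a b => ⟨fun n => ∑' k, a.coeff k * b.coeff (n - k),
    (summable_weighted_conv a b).prod.of_nonneg_of_le
      (fun n => mul_nonneg (annulusWeight_pos p q n).le (norm_nonneg _))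
      (weight_mul_norm_tsum_le a b)⟩⟩

lemma coeff_mul (a b : LaurentAlg p q S) (n : ℤ) :
    (a * b).coeff n = ∑' k, a.coeff k * b.coeff (n - k) := rfl

/-- The monomial `s * w ^ k`. -/
def monomial (k : ℤ) (s : S) : LaurentAlg p q S :=
  ⟨Pi.single k s, summable_of_ne_finset_zero (s := {k}) fun j hj => by
    rw [Pi.single_eq_of_ne (by simpa using hj)]; simp⟩

lemma coeff_monomial (k j : ℤ) (s : S) :
    (monomial k s : LaurentAlg p q S).coeff j = if j = k then s else 0 := by
  simp [monomial, Pi.single_apply]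

instance : One (LaurentAlg p q S) := ⟨monomial 0 1⟩

lemma one_def : (1 : LaurentAlg p q S) = monomial 0 1 := rfl

lemma coeff_monomial_mul (k n : ℤ) (s : S) (a : LaurentAlg p q S) :
    (monomial k s * a).coeff n = s * a.coeff (n - k) := by
  rw [coeff_mul, tsum_eq_single k (fun j hj => by simp [coeff_monomial, hj])]
  simp [coeff_monomial]

protected lemma mul_comm (a b : LaurentAlg p q S) : a * b = b * a := by
  ext n
  rw [coeff_mul, coeff_mul, ← (Equiv.subLeft n).tsum_eq]
  exact tsum_congr fun k => by simp [mul_comm]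

protected lemma one_mul (a : LaurentAlg p q S) : 1 * a = a := by
  ext n
  simp [one_def, coeff_monomial_mul]

section Ring

variable [CompleteSpace S]

lemma summable_coeff_mul (a b : LaurentAlg p q S) (n : ℤ) :
    Summable fun k => a.coeff k * b.coeff (n - k) :=
  (summable_norm_coeff_mul a b n).of_norm

protected lemma mul_assoc (a b c : LaurentAlg p q S) : a * b * c = a * (b * c) := by
  ext n
  have hsum : Summable fun x : ℤ × ℤ =>
      a.coeff x.2 * b.coeff (x.1 - x.2) * c.coeff (n - x.1) := by
    refine Summable.of_norm (((summable_norm_conv a b).mul_right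
      (∑' k, ‖c.coeff k‖)).of_nonneg_of_le (fun _ => norm_nonneg _) fun x => ?_)
    refine (norm_mul_le _ _).trans (mul_le_mul (norm_mul_le _ _) ?_ (norm_nonneg _) (by positivity))
    exact c.summable_norm.le_tsum (n - x.1) fun _ _ => norm_nonneg _
  calc (a * b * c).coeff n
      = ∑' k, ∑' j, a.coeff j * b.coeff (k - j) * c.coeff (n - k) := by
        rw [coeff_mul]
        exact tsum_congr fun k => ((summable_coeff_mul a b k).tsum_mul_right _).symm
    _ = ∑' j, ∑' k, a.coeff j * b.coeff (k - j) * c.coeff (n - k) :=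
        (Summable.tsum_comm (f := fun k j => a.coeff j * b.coeff (k - j) * c.coeff (n - k))
          hsum).symm
    _ = (a * (b * c)).coeff n := by
        rw [coeff_mul]
        refine tsum_congr fun j => ?_
        rw [coeff_mul, ← (summable_coeff_mul b c (n - j)).tsum_mul_left,
          ← (Equiv.addRight j).tsum_eq]
        refine tsum_congr fun k => ?_
        simp only [Equiv.coe_addRight, add_sub_cancel_right, mul_assoc]
        congr 3
        ring

protected lemma add_mul (a b c : LaurentAlg p q S) : (a + b) * c = a * c + b * c := by
  ext n
  simp only [coeff_mul, coeff_add, add_mul]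
  exact (summable_coeff_mul a c n).tsum_add (summable_coeff_mul b c n)

instance : CommRing (LaurentAlg p q S) where
  mul_comm := LaurentAlg.mul_comm
  mul_assoc := LaurentAlg.mul_assoc
  one_mul := LaurentAlg.one_mul
  mul_one a := by rw [LaurentAlg.mul_comm, LaurentAlg.one_mul]
  right_distrib := LaurentAlg.add_mul
  left_distrib a b c := by
    rw [LaurentAlg.mul_comm, LaurentAlg.add_mul, LaurentAlg.mul_comm b, LaurentAlg.mul_comm c]
  zero_mul a := by ext; simp [coeff_mul]
  mul_zero a := by ext; simp [coeff_mul]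
  sub_eq_add_neg := sub_eq_add_neg
  zsmul := (· • ·)
  zsmul_zero' := SubNegMonoid.zsmul_zero'
  zsmul_succ' := SubNegMonoid.zsmul_succ'
  zsmul_neg' := SubNegMonoid.zsmul_neg'
  neg_add_cancel := neg_add_cancel

/-- The constant Laurent series. -/
def C : S →+* LaurentAlg p q S where
  toFun := monomial 0
  map_one' := rfl
  map_zero' := by ext; simp [coeff_monomial]
  map_mul' s t := by
    ext; simp only [coeff_monomial_mul, coeff_monomial]; split_ifs <;> simp_all
  map_add' s t := by ext; simp only [coeff_add, coeff_monomial]; split_ifs <;> simp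

/-- The coordinate `w`, as a unit. -/
def W : (LaurentAlg p q S)ˣ where
  val := monomial 1 1
  inv := monomial (-1) 1
  val_inv := by
    ext; simp only [one_def, coeff_monomial_mul, coeff_monomial]; split_ifs <;> simp_all
  inv_val := by
    ext; simp only [one_def, coeff_monomial_mul, coeff_monomial]; split_ifs <;> simp_all

/-- Restriction to a smaller annulus. -/
def restrict (hp : p' ≤ p) (hq : q' ≤ q) : LaurentAlg p q S →+* LaurentAlg p' q' S where
  toFun a := ⟨a.coeff, a.summable'.of_nonneg_of_le
    (fun k => mul_nonneg (annulusWeight_pos p' q' k).le (norm_nonneg _)) fun _ =>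
      mul_le_mul_of_nonneg_right (mul_le_mul
        (pow_le_pow_left₀ (zero_le_one.trans (show (1 : ℝ) ≤ p' from p'.2))
          (show (p' : ℝ) ≤ p from hp) _)
        (pow_le_pow_left₀ (zero_le_one.trans (show (1 : ℝ) ≤ q' from q'.2))
          (show (q' : ℝ) ≤ q from hq) _)
        (pow_nonneg (zero_le_one.trans q'.2) _) (pow_nonneg (zero_le_one.trans p.2) _))
        (norm_nonneg _)⟩
  map_one' := rfl
  map_zero' := rfl
  map_mul' _ _ := rfl
  map_add' _ _ := rfl

end Ring

section Norm

variable [NormedAlgebra ℂ S]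

/-- The isometric embedding into `ℓ¹` rescaling the coefficients by the weight. -/
def toL1 : LaurentAlg p q S →+ lp (fun _ : ℤ => S) 1 where
  toFun a := ⟨fun k => (annulusWeight p q k : ℂ) • a.coeff k, memℓp_gen <| by
    simpa [norm_smul, abs_of_pos (annulusWeight_pos p q _)] using a.summable'⟩
  map_zero' := by ext; simp
  map_add' a b := by ext; exact smul_add _ _ _

lemma coe_toL1 (a : LaurentAlg p q S) (k : ℤ) :
    toL1 a k = (annulusWeight p q k : ℂ) • a.coeff k := rfl

lemma ofReal_annulusWeight_ne_zero (p q : Ici (1 : ℝ)) (k : ℤ) :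
    (annulusWeight p q k : ℂ) ≠ 0 :=
  Complex.ofReal_ne_zero.2 (annulusWeight_pos p q k).ne'

lemma toL1_injective : Function.Injective (toL1 : LaurentAlg p q S → lp (fun _ : ℤ => S) 1) := by
  intro a b h
  ext k
  have hk : toL1 a k = toL1 b k := by rw [h]
  rw [coe_toL1, coe_toL1] at hk
  exact smul_right_injective S (ofReal_annulusWeight_ne_zero p q k) hk

lemma toL1_surjective :
    Function.Surjective (toL1 : LaurentAlg p q S → lp (fun _ : ℤ => S) 1) := by
  intro x
  have hx : Summable fun k => ‖x k‖ := by
    simpa using (memℓp_gen_iff (by simp)).1 (lp.memℓp x)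
  refine ⟨⟨fun k => (annulusWeight p q k : ℂ)⁻¹ • x k, hx.congr fun k => ?_⟩, ?_⟩
  · rw [norm_smul, norm_inv, Complex.norm_real, Real.norm_of_nonneg (annulusWeight_pos p q k).le,
      mul_inv_cancel_left₀ (annulusWeight_pos p q k).ne']
  · ext k
    exact smul_inv_smul₀ (ofReal_annulusWeight_ne_zero p q k) (x k)

instance : NormedAddCommGroup (LaurentAlg p q S) :=
  NormedAddCommGroup.induced _ _ toL1 toL1_injective

lemma norm_def (a : LaurentAlg p q S) : ‖a‖ = ∑' k, annulusWeight p q k * ‖a.coeff k‖ := by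
  change ‖toL1 a‖ = _
  rw [lp.norm_eq_tsum_rpow (by simp)]
  simp [coe_toL1, norm_smul, abs_of_pos (annulusWeight_pos p q _)]

variable [CompleteSpace S]

instance : CompleteSpace (LaurentAlg p q S) := by
  have h : Isometry (toL1 : LaurentAlg p q S → lp (fun _ : ℤ => S) 1) :=
    AddMonoidHomClass.isometry_of_norm _ fun _ => rfl
  rw [completeSpace_iff_isComplete_range h.isUniformInducing, toL1_surjective.range_eq]
  exact completeSpace_iff_isComplete_univ.1 inferInstance

instance : NormedCommRing (LaurentAlg p q S) where
  dist_eq := NormedAddCommGroup.dist_eq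
  norm_mul_le a b := by
    rw [norm_def, norm_def, norm_def]
    calc ∑' n, annulusWeight p q n * ‖(a * b).coeff n‖
        ≤ ∑' n, ∑' k, annulusWeight p q k * ‖a.coeff k‖ *
            (annulusWeight p q (n - k) * ‖b.coeff (n - k)‖) :=
          (a * b).summable'.tsum_le_tsum (weight_mul_norm_tsum_le a b)
            (summable_weighted_conv a b).prod
      _ = ∑' x : ℤ × ℤ, annulusWeight p q x.2 * ‖a.coeff x.2‖ *
            (annulusWeight p q (x.1 - x.2) * ‖b.coeff (x.1 - x.2)‖) :=
          (summable_weighted_conv a b).tsum_prod.symm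
      _ = ∑' y : ℤ × ℤ, annulusWeight p q y.1 * ‖a.coeff y.1‖ *
            (annulusWeight p q y.2 * ‖b.coeff y.2‖) :=
          convEquiv.tsum_eq fun y : ℤ × ℤ => annulusWeight p q y.1 * ‖a.coeff y.1‖ *
            (annulusWeight p q y.2 * ‖b.coeff y.2‖)
      _ = _ := (a.summable'.tsum_mul_tsum b.summable' (convEquiv.summable_iff.1
          (summable_weighted_conv a b))).symm
      _ ≤ _ := le_rfl

lemma norm_monomial (k : ℤ) (s : S) :
    ‖(monomial k s : LaurentAlg p q S)‖ = annulusWeight p q k * ‖s‖ := by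
  rw [norm_def, tsum_eq_single k fun j hj => by simp [coeff_monomial, hj]]
  simp [coeff_monomial]

instance [NormOneClass S] : NormOneClass (LaurentAlg p q S) :=
  ⟨by rw [one_def, norm_monomial, annulusWeight_zero, norm_one, one_mul]⟩

instance : Algebra ℂ (LaurentAlg p q S) := (C.comp (algebraMap ℂ S)).toAlgebra

variable [NormOneClass S]

instance : NormedAlgebra ℂ (LaurentAlg p q S) where
  norm_smul_le c a := by
    rw [Algebra.smul_def]
    refine (norm_mul_le _ _).trans (mul_le_mul_of_nonneg_right ?_ (norm_nonneg _))
    change ‖(monomial 0 (algebraMap ℂ S c) : LaurentAlg p q S)‖ ≤ _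
    rw [norm_monomial, annulusWeight_zero, one_mul, norm_algebraMap']

/-- The constants, as an algebra homomorphism. -/
def constHom : S →ₐ[ℂ] LaurentAlg p q S := { C with commutes' := fun _ => rfl }

/-- Restriction to a smaller annulus, as an algebra homomorphism. -/
def restrictHom (hp : p' ≤ p) (hq : q' ≤ q) : LaurentAlg p q S →ₐ[ℂ] LaurentAlg p' q' S :=
  { restrict hp hq with commutes' := fun _ => rfl }

end Norm

section Eval

variable {T : Type} [NormedCommRing T]

lemma summable_norm_eval (η : S →+* T) (hη : ∀ s, ‖η s‖ ≤ ‖s‖) (u : Tˣ)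
    (hu : ∀ k : ℤ, ‖((u ^ k : Tˣ) : T)‖ ≤ annulusWeight p q k) (a : LaurentAlg p q S) :
    Summable fun k => ‖η (a.coeff k) * ((u ^ k : Tˣ) : T)‖ :=
  a.summable'.of_nonneg_of_le (fun _ => norm_nonneg _) fun k => by
    rw [mul_comm (annulusWeight p q k)]
    exact (norm_mul_le _ _).trans (mul_le_mul (hη _) (hu k) (norm_nonneg _) (norm_nonneg _))

variable [CompleteSpace T] [CompleteSpace S]

lemma tsum_conv {f g : ℤ → T} (hf : Summable fun k => ‖f k‖) (hg : Summable fun k => ‖g k‖) :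
    ∑' n, ∑' k, f k * g (n - k) = (∑' k, f k) * ∑' k, g k := by
  have hs : Summable fun y : ℤ × ℤ => f y.1 * g y.2 := summable_mul_of_summable_norm hf hg
  have hs' : Summable fun x : ℤ × ℤ => f x.2 * g (x.1 - x.2) :=
    (convEquiv.summable_iff (f := fun y : ℤ × ℤ => f y.1 * g y.2)).2 hs
  calc ∑' n, ∑' k, f k * g (n - k)
      = ∑' x : ℤ × ℤ, f x.2 * g (x.1 - x.2) :=
        (Summable.tsum_prod (f := fun x : ℤ × ℤ => f x.2 * g (x.1 - x.2)) hs').symm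
    _ = ∑' y : ℤ × ℤ, f y.1 * g y.2 := convEquiv.tsum_eq fun y : ℤ × ℤ => f y.1 * g y.2
    _ = _ := (tsum_mul_tsum_of_summable_norm hf hg).symm

/-- Evaluation of Laurent series at the point `u`, with coefficients mapped by `η`. -/
def evalHom (η : S →+* T) (hη : ∀ s, ‖η s‖ ≤ ‖s‖) (u : Tˣ)
    (hu : ∀ k : ℤ, ‖((u ^ k : Tˣ) : T)‖ ≤ annulusWeight p q k) : LaurentAlg p q S →+* T where
  toFun a := ∑' k, η (a.coeff k) * ((u ^ k : Tˣ) : T)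
  map_zero' := by simp
  map_add' a b := by
    simp only [coeff_add, map_add, add_mul]
    exact (summable_norm_eval η hη u hu a).of_norm.tsum_add (summable_norm_eval η hη u hu b).of_norm
  map_one' := by
    rw [tsum_eq_single 0 fun j hj => by simp [one_def, coeff_monomial, hj]]
    simp [one_def, coeff_monomial]
  map_mul' a b := by
    have hcont : Continuous η := AddMonoidHomClass.continuous_of_bound η 1 fun s => by
      simpa using hη s
    set f : ℤ → T := fun k => η (a.coeff k) * ((u ^ k : Tˣ) : T) with hf
    set g : ℤ → T := fun k => η (b.coeff k) * ((u ^ k : Tˣ) : T) with hg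
    have ha : Summable fun k => ‖f k‖ := summable_norm_eval η hη u hu a
    have hb : Summable fun k => ‖g k‖ := summable_norm_eval η hη u hu b
    calc ∑' n, η ((a * b).coeff n) * ((u ^ n : Tˣ) : T)
        = ∑' n, ∑' k, f k * g (n - k) := by
          refine tsum_congr fun n => ?_
          have hm : Summable fun k => η (a.coeff k * b.coeff (n - k)) :=
            (summable_coeff_mul a b n).map η hcont
          rw [coeff_mul, (summable_coeff_mul a b n).map_tsum η hcont, ← hm.tsum_mul_right]
          refine tsum_congr fun k => ?_
          have hun : (u ^ n : Tˣ) = u ^ k * u ^ (n - k) := by rw [← zpow_add]; congr 1; ring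
          simp only [hf, hg, map_mul, hun, Units.val_mul]
          ring
      _ = _ := tsum_conv ha hb

lemma evalHom_apply (η : S →+* T) (hη : ∀ s, ‖η s‖ ≤ ‖s‖) (u : Tˣ)
    (hu : ∀ k : ℤ, ‖((u ^ k : Tˣ) : T)‖ ≤ annulusWeight p q k) (a : LaurentAlg p q S) :
    evalHom η hη u hu a = ∑' k, η (a.coeff k) * ((u ^ k : Tˣ) : T) := rfl

lemma evalHom_monomial (η : S →+* T) (hη : ∀ s, ‖η s‖ ≤ ‖s‖) (u : Tˣ)
    (hu : ∀ k : ℤ, ‖((u ^ k : Tˣ) : T)‖ ≤ annulusWeight p q k) (k : ℤ) (s : S) :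
    evalHom η hη u hu (monomial k s) = η s * ((u ^ k : Tˣ) : T) := by
  rw [evalHom_apply, tsum_eq_single k fun j hj => by simp [coeff_monomial, hj]]
  simp [coeff_monomial]

end Eval

section Split

/-- The part of a Laurent series on the unit circle with nonnegative exponents. -/
def nonnegPart : LaurentAlg ⟨1, self_mem_Ici⟩ ⟨1, self_mem_Ici⟩ S →+
    LaurentAlg ⟨1, self_mem_Ici⟩ q S where
  toFun a := ⟨fun k => if 0 ≤ k then a.coeff k else 0, a.summable'.of_nonneg_of_le
    (fun k => mul_nonneg (annulusWeight_pos _ _ k).le (norm_nonneg _)) fun k => by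
      split_ifs with hk
      · simp [annulusWeight, Int.toNat_eq_zero.2 (neg_nonpos.2 hk)]
      · simp [annulusWeight]⟩
  map_zero' := by ext; simp
  map_add' a b := by ext k; simp only [coeff_add]; split_ifs <;> simp

/-- The part of a Laurent series on the unit circle with negative exponents. -/
def negPart : LaurentAlg ⟨1, self_mem_Ici⟩ ⟨1, self_mem_Ici⟩ S →+
    LaurentAlg p ⟨1, self_mem_Ici⟩ S where
  toFun a := ⟨fun k => if 0 ≤ k then 0 else a.coeff k, a.summable'.of_nonneg_of_le
    (fun k => mul_nonneg (annulusWeight_pos _ _ k).le (norm_nonneg _)) fun k => by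
      split_ifs with hk
      · simp [annulusWeight]
      · simp [annulusWeight, Int.toNat_eq_zero.2 (not_le.1 hk).le]⟩
  map_zero' := by ext; simp
  map_add' a b := by ext k; simp only [coeff_add]; split_ifs <;> simp

/-- Series on two overlapping annuli with the same coefficients define a series on the union. -/
def glue (a : LaurentAlg ⟨1, self_mem_Ici⟩ q S) (b : LaurentAlg p ⟨1, self_mem_Ici⟩ S)
    (h : ∀ k, a.coeff k = b.coeff k) : LaurentAlg p q S :=
  ⟨a.coeff, (a.summable'.add b.summable').of_nonneg_of_le
    (fun k => mul_nonneg (annulusWeight_pos _ _ k).le (norm_nonneg _)) fun k => by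
      rw [← h k, ← add_mul]
      refine mul_le_mul_of_nonneg_right ?_ (norm_nonneg _)
      rcases le_total 0 k with hk | hk
      · refine le_add_of_nonneg_of_le (annulusWeight_pos _ _ k).le ?_
        simp [annulusWeight, Int.toNat_eq_zero.2 (neg_nonpos.2 hk)]
      · refine le_add_of_le_of_nonneg ?_ (annulusWeight_pos _ _ k).le
        simp [annulusWeight, Int.toNat_eq_zero.2 hk]⟩

end Split

end LaurentAlg

section Gluing

lemma map_mem_span_range {ι R R' : Type} [CommRing R] [CommRing R'] (φ : R →+* R') {t : ι → R}
    {x : R} (hx : x ∈ Ideal.span (range t)) : φ x ∈ Ideal.span (range fun i => φ (t i)) := by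
  have h := Ideal.mem_map_of_mem φ hx
  rwa [Ideal.map_span, ← range_comp] at h

variable {ι F A B Z : Type} [Fintype ι] [CommRing F] [CommRing A] [CommRing B] [CommRing Z]

/-- Commutative rings `F → A, B → Z` for which `0 → F → A ⊕ B → Z → 0` is exact. -/
structure CousinSquare (F A B Z : Type) [CommRing F] [CommRing A] [CommRing B] [CommRing Z] where
  /-- The map `F → A`. -/
  toA : F →+* A
  /-- The map `F → B`. -/
  toB : F →+* B
  /-- The map `A → Z`. -/
  fromA : A →+* Z
  /-- The map `B → Z`. -/
  fromB : B →+* Z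
  comm : ∀ x, fromA (toA x) = fromB (toB x)
  toA_injective : Function.Injective toA
  /-- The first component of an additive splitting. -/
  splitA : Z →+ A
  /-- The second component of an additive splitting. -/
  splitB : Z →+ B
  split : ∀ z, fromA (splitA z) + fromB (splitB z) = z
  glue : ∀ a b, fromA a = fromB b → ∃ x, toA x = a ∧ toB x = b

namespace CousinSquare

variable (Q : CousinSquare F A B Z) {t : ι → F}

lemma exists_lift {a : A} {b : B}
    (h : Q.fromA a - Q.fromB b ∈ Ideal.span (range fun i => Q.fromA (Q.toA (t i)))) :
    ∃ x, Q.toA x - a ∈ Ideal.span (range fun i => Q.toA (t i)) ∧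
      Q.toB x - b ∈ Ideal.span (range fun i => Q.toB (t i)) := by
  obtain ⟨c, hc⟩ := Ideal.mem_span_range_iff_exists_fun.1 h
  obtain ⟨x, hxa, hxb⟩ := Q.glue (a - ∑ i, Q.splitA (c i) * Q.toA (t i))
    (b + ∑ i, Q.splitB (c i) * Q.toB (t i)) (by
      rw [map_sub, map_add, map_sum, map_sum, sub_eq_iff_eq_add, add_assoc, ← sub_eq_iff_eq_add',
        ← hc, ← Finset.sum_add_distrib]
      refine Finset.sum_congr rfl fun i _ => ?_
      rw [map_mul, map_mul, ← Q.comm, ← add_mul, add_comm, Q.split])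
  refine ⟨x, ?_, ?_⟩
  · rw [hxa]
    exact Ideal.mem_span_range_iff_exists_fun.2 ⟨fun i => -Q.splitA (c i), by simp⟩
  · rw [hxb]
    exact Ideal.mem_span_range_iff_exists_fun.2 ⟨fun i => Q.splitB (c i), by simp⟩

lemma sum_antisymm_eq_zero {R : Type} [CommRing R] (h2 : ∀ x : R, x + x = 0 → x = 0)
    (u : ι → R) (m : ι → ι → R) (hm : ∀ k l, m k l = -m l k) :
    ∑ l, (∑ k, u k * m k l) * u l = 0 := by
  apply h2
  have h : ∑ l, (∑ k, u k * m k l) * u l = ∑ l, ∑ k, u k * u l * m k l := by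
    refine Finset.sum_congr rfl fun l _ => ?_
    rw [Finset.sum_mul]
    exact Finset.sum_congr rfl fun k _ => by ring
  rw [h]
  nth_rewrite 2 [Finset.sum_comm]
  rw [← Finset.sum_add_distrib]
  refine Finset.sum_eq_zero fun l _ => ?_
  rw [← Finset.sum_add_distrib]
  refine Finset.sum_eq_zero fun k _ => ?_
  rw [hm k l]
  ring

lemma sq_mem_span (h2 : ∀ x : A, x + x = 0 → x = 0) {b : F}
    (hA : Q.toA b ∈ Ideal.span (range fun i => Q.toA (t i)))
    (hB : Q.toB b ∈ Ideal.span (range fun i => Q.toB (t i))) :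
    b ^ 2 ∈ Ideal.span (range t) := by
  obtain ⟨g, hg⟩ := Ideal.mem_span_range_iff_exists_fun.1 hA
  obtain ⟨g', hg'⟩ := Ideal.mem_span_range_iff_exists_fun.1 hB
  set s : ι → Z := fun i => Q.fromA (Q.toA (t i)) with hs
  set δ : ι → Z := fun i => Q.fromA (g i) - Q.fromB (g' i) with hδ
  have hgZ : ∑ i, Q.fromA (g i) * s i = Q.fromA (Q.toA b) := by
    rw [← hg, map_sum]; simp [hs]
  have hgZ' : ∑ i, Q.fromB (g' i) * s i = Q.fromA (Q.toA b) := by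
    rw [Q.comm, ← hg', map_sum]; simp [hs, Q.comm]
  have hδ0 : ∑ i, δ i * s i = 0 := by
    simp only [hδ, sub_mul, Finset.sum_sub_distrib, hgZ, hgZ', sub_self]
  set m : ι → ι → Z := fun k l => Q.fromA (g k) * δ l - Q.fromA (g l) * δ k with hm
  have hanti : ∀ k l, m k l = -m l k := fun k l => by simp [hm]
  have hmsum : ∀ l, ∑ k, s k * m k l = Q.fromA (Q.toA b) * δ l := fun l => by
    calc ∑ k, s k * m k l
        = (∑ k, Q.fromA (g k) * s k) * δ l - Q.fromA (g l) * ∑ k, δ k * s k := by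
          rw [Finset.sum_mul, Finset.mul_sum, ← Finset.sum_sub_distrib]
          exact Finset.sum_congr rfl fun k _ => by simp only [hm]; ring
      _ = _ := by rw [hgZ, hδ0, mul_zero, sub_zero]
  have hglue : ∀ l, ∃ x, Q.toA x = Q.toA b * g l - ∑ k, Q.toA (t k) * Q.splitA (m k l) ∧
      Q.toB x = Q.toB b * g' l + ∑ k, Q.toB (t k) * Q.splitB (m k l) := fun l => by
    apply Q.glue
    have h : ∑ k, s k * Q.fromA (Q.splitA (m k l)) + ∑ k, s k * Q.fromB (Q.splitB (m k l)) =
        Q.fromA (Q.toA b) * (Q.fromA (g l) - Q.fromB (g' l)) := by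
      rw [← Finset.sum_add_distrib, ← hmsum l]
      exact Finset.sum_congr rfl fun k _ => by rw [← mul_add, Q.split]
    simp only [map_sub, map_add, map_mul, map_sum, ← Q.comm]
    linear_combination -h
  choose x hx _ using hglue
  refine Ideal.mem_span_range_iff_exists_fun.2 ⟨x, Q.toA_injective ?_⟩
  have h0 := sum_antisymm_eq_zero h2 (fun i => Q.toA (t i)) (fun k l => Q.splitA (m k l))
    fun k l => by rw [hanti, map_neg]
  simp only [map_sum, map_mul, map_pow, hx, sub_mul, Finset.sum_sub_distrib, mul_assoc,
    ← Finset.mul_sum, hg]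
  rw [h0]
  ring

lemma exists_idempotent_lift (h2 : ∀ x : A, x + x = 0 → x = 0) {a : A} {b : B}
    (ha : a ^ 2 - a ∈ Ideal.span (range fun i => Q.toA (t i)))
    (hb : b ^ 2 - b ∈ Ideal.span (range fun i => Q.toB (t i)))
    (h : Q.fromA a - Q.fromB b ∈ Ideal.span (range fun i => Q.fromA (Q.toA (t i)))) :
    ∃ e, e ^ 2 - e ∈ Ideal.span (range t) ∧
      Q.toA e - a ∈ Ideal.span (range fun i => Q.toA (t i)) ∧
      Q.toB e - b ∈ Ideal.span (range fun i => Q.toB (t i)) := by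
  obtain ⟨x, hxa, hxb⟩ := Q.exists_lift h
  have hxa2 : Q.toA (x ^ 2 - x) ∈ Ideal.span (range fun i => Q.toA (t i)) := by
    have : Q.toA (x ^ 2 - x) = (Q.toA x + a - 1) * (Q.toA x - a) + (a ^ 2 - a) := by
      simp only [map_sub, map_pow]; ring
    rw [this]
    exact add_mem (Ideal.mul_mem_left _ _ hxa) ha
  have hxb2 : Q.toB (x ^ 2 - x) ∈ Ideal.span (range fun i => Q.toB (t i)) := by
    have : Q.toB (x ^ 2 - x) = (Q.toB x + b - 1) * (Q.toB x - b) + (b ^ 2 - b) := by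
      simp only [map_sub, map_pow]; ring
    rw [this]
    exact add_mem (Ideal.mul_mem_left _ _ hxb) hb
  have hsq := Q.sq_mem_span h2 hxa2 hxb2
  refine ⟨3 * x ^ 2 - 2 * x ^ 3, ?_, ?_, ?_⟩
  · have : (3 * x ^ 2 - 2 * x ^ 3) ^ 2 - (3 * x ^ 2 - 2 * x ^ 3) =
        (4 * (x ^ 2 - x) - 3) * (x ^ 2 - x) ^ 2 := by ring
    rw [this]
    exact Ideal.mul_mem_left _ _ hsq
  · have : Q.toA (3 * x ^ 2 - 2 * x ^ 3) - a =
        Q.toA (1 - 2 * x) * Q.toA (x ^ 2 - x) + (Q.toA x - a) := by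
      rw [← map_mul, ← add_sub_assoc, ← map_add]; congr 2; ring
    rw [this]
    exact add_mem (Ideal.mul_mem_left _ _ hxa2) hxa
  · have : Q.toB (3 * x ^ 2 - 2 * x ^ 3) - b =
        Q.toB (1 - 2 * x) * Q.toB (x ^ 2 - x) + (Q.toB x - b) := by
      rw [← map_mul, ← add_sub_assoc, ← map_add]; congr 2; ring
    rw [this]
    exact add_mem (Ideal.mul_mem_left _ _ hxb2) hxb

end CousinSquare

end Gluing

section Nullstellensatz

variable {R : Type} [NormedCommRing R] [NormedAlgebra ℂ R] [CompleteSpace R]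

lemma exists_algHom_eq_zero {I : Ideal R} (hI : I ≠ ⊤) : ∃ φ : R →ₐ[ℂ] ℂ, ∀ x ∈ I, φ x = 0 := by
  obtain ⟨M, hM, hIM⟩ := I.exists_le_maximal hI
  exact ⟨WeakDual.CharacterSpace.equivAlgHom M.toCharacterSpace, fun x hx =>
    M.toCharacterSpace_apply_eq_zero_of_mem (hIM hx)⟩

/-- An idempotent modulo `I` vanishing at all characters that kill `I` belongs to `I`. -/
lemma mem_of_idempotent_of_forall_algHom {I : Ideal R} {h : R} (hh : h ^ 2 - h ∈ I)
    (hφ : ∀ φ : R →ₐ[ℂ] ℂ, (∀ x ∈ I, φ x = 0) → φ h = 0) : h ∈ I := by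
  have htop : I ⊔ Ideal.span {1 - h} = ⊤ := by
    by_contra hne
    obtain ⟨φ, hφ0⟩ := exists_algHom_eq_zero hne
    have h1 := hφ0 (1 - h) (Ideal.mem_sup_right (Ideal.mem_span_singleton_self _))
    rw [map_sub, map_one, hφ φ fun x hx => hφ0 x (Ideal.mem_sup_left hx)] at h1
    simp at h1
  obtain ⟨x, hx, y, hy, hxy⟩ := Submodule.mem_sup.1 ((Ideal.eq_top_iff_one _).1 htop)
  obtain ⟨c, rfl⟩ := Ideal.mem_span_singleton'.1 hy
  have : h = h * x - c * (h ^ 2 - h) := by linear_combination (-h) * hxy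
  rw [this]
  exact sub_mem (Ideal.mul_mem_left _ _ hx) (Ideal.mul_mem_left _ _ hh)

/-- Two idempotents modulo `I` that agree at all characters killing `I` agree modulo `I`. -/
lemma sub_mem_of_idempotents {I : Ideal R} {a b : R} (ha : a ^ 2 - a ∈ I) (hb : b ^ 2 - b ∈ I)
    (hφ : ∀ φ : R →ₐ[ℂ] ℂ, (∀ x ∈ I, φ x = 0) → φ a = φ b) : a - b ∈ I := by
  have hcube : (a - b) ^ 3 - (a - b) ∈ I := by
    have : (a - b) ^ 3 - (a - b) =
        (a + 1 - 3 * b) * (a ^ 2 - a) + (3 * a - b - 1) * (b ^ 2 - b) := by ring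
    rw [this]
    exact add_mem (Ideal.mul_mem_left _ _ ha) (Ideal.mul_mem_left _ _ hb)
  have hsq : (a - b) ^ 2 ∈ I := by
    refine mem_of_idempotent_of_forall_algHom ?_ fun φ h0 => by simp [hφ φ h0]
    have : ((a - b) ^ 2) ^ 2 - (a - b) ^ 2 = (a - b) * ((a - b) ^ 3 - (a - b)) := by ring
    rw [this]
    exact Ideal.mul_mem_left _ _ hcube
  have : a - b = (a - b) * (a - b) ^ 2 - ((a - b) ^ 3 - (a - b)) := by ring
  rw [this]
  exact sub_mem (Ideal.mul_mem_left _ _ hsq) hcube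

end Nullstellensatz

namespace LaurentAlg

variable {p q p' q' : Ici (1 : ℝ)} {S : Type} [NormedCommRing S] [CompleteSpace S]

/-- The rings of Laurent series on an annulus, its two halves and the unit circle. -/
def cousinSquare (p q : Ici (1 : ℝ)) (S : Type) [NormedCommRing S] [CompleteSpace S] :
    CousinSquare (LaurentAlg p q S) (LaurentAlg ⟨1, self_mem_Ici⟩ q S)
      (LaurentAlg p ⟨1, self_mem_Ici⟩ S)
      (LaurentAlg ⟨1, self_mem_Ici⟩ ⟨1, self_mem_Ici⟩ S) where
  toA := restrict p.2 le_rfl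
  toB := restrict le_rfl q.2
  fromA := restrict le_rfl q.2
  fromB := restrict p.2 le_rfl
  comm _ := rfl
  toA_injective a b h := coeff_injective (funext fun k =>
    congrFun (congrArg coeff h : (restrict _ _ a).coeff = (restrict _ _ b).coeff) k)
  splitA := nonnegPart
  splitB := negPart
  split z := by
    ext k
    change (if 0 ≤ k then z.coeff k else 0) + (if 0 ≤ k then 0 else z.coeff k) = z.coeff k
    split_ifs <;> simp
  glue a b h :=
    have h' : ∀ k, a.coeff k = b.coeff k := fun k => congrFun (congrArg coeff h) k
    ⟨LaurentAlg.glue a b h', rfl, coeff_injective (funext h')⟩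

/-- The family `W - f, t i` of elements of the Laurent algebra. -/
def graphFamily {ι : Type} (t : ι → S) (f : S) (o : Option ι) : LaurentAlg p q S :=
  o.elim (((W : (LaurentAlg p q S)ˣ) : LaurentAlg p q S) - C f) fun i => C (t i)

lemma restrict_graphFamily {ι : Type} (hp : p' ≤ p) (hq : q' ≤ q) (t : ι → S) (f : S)
    (o : Option ι) :
    restrict hp hq (graphFamily t f o : LaurentAlg p q S) = graphFamily t f o := by
  cases o with
  | none => exact map_sub (restrict hp hq) _ _
  | some i => rfl

lemma norm_zpow_le {T : Type} [NormedCommRing T] [NormOneClass T] {u : Tˣ}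
    (hp : ‖(u : T)‖ ≤ p) (hq : ‖((u⁻¹ : Tˣ) : T)‖ ≤ q) (k : ℤ) :
    ‖((u ^ k : Tˣ) : T)‖ ≤ annulusWeight p q k := by
  obtain ⟨m, rfl | rfl⟩ := k.eq_nat_or_neg
  · simpa [annulusWeight] using (norm_pow_le _ _).trans (pow_le_pow_left₀ (norm_nonneg _) hp m)
  · rw [zpow_neg, zpow_natCast, ← inv_pow, Units.val_pow_eq_pow_val]
    simpa [annulusWeight] using (norm_pow_le _ _).trans (pow_le_pow_left₀ (norm_nonneg _) hq m)

variable [NormOneClass S]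

/-- Evaluation of Laurent series at a unit of the coefficient algebra. -/
def evalSelf (f : Sˣ) (hp : ‖(f : S)‖ ≤ p) (hq : ‖((f⁻¹ : Sˣ) : S)‖ ≤ q) :
    LaurentAlg p q S →+* S :=
  evalHom (RingHom.id S) (fun _ => le_rfl) f (norm_zpow_le hp hq)

lemma evalSelf_graphFamily_mem {ι : Type} (t : ι → S) (f : Sˣ) (hp : ‖(f : S)‖ ≤ p)
    (hq : ‖((f⁻¹ : Sˣ) : S)‖ ≤ q) (o : Option ι) :
    evalSelf f hp hq (graphFamily t f o) ∈ Ideal.span (range t) := by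
  cases o with
  | none =>
    change evalSelf f hp hq (monomial 1 1 - monomial 0 (f : S)) ∈ Ideal.span (range t)
    rw [map_sub, evalSelf, evalHom_monomial, evalHom_monomial]
    simp
  | some i =>
    change evalSelf f hp hq (monomial 0 (t i)) ∈ Ideal.span (range t)
    rw [evalSelf, evalHom_monomial]
    simpa using Ideal.subset_span (mem_range_self i)

variable [NormedAlgebra ℂ S]

lemma norm_algHom_W_le (χ : LaurentAlg p q S →ₐ[ℂ] ℂ) :
    ‖χ (W : (LaurentAlg p q S)ˣ)‖ ≤ p := by
  refine (AlgHom.norm_apply_le_self χ _).trans ?_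
  change ‖(monomial 1 1 : LaurentAlg p q S)‖ ≤ p
  simp [norm_monomial, annulusWeight]

lemma norm_algHom_W_inv_le (χ : LaurentAlg p q S →ₐ[ℂ] ℂ) :
    ‖χ ((W⁻¹ : (LaurentAlg p q S)ˣ) : LaurentAlg p q S)‖ ≤ q := by
  refine (AlgHom.norm_apply_le_self χ _).trans ?_
  change ‖(monomial (-1) 1 : LaurentAlg p q S)‖ ≤ q
  simp [norm_monomial, annulusWeight]

lemma one_le_norm_algHom_W (χ : LaurentAlg p ⟨1, self_mem_Ici⟩ S →ₐ[ℂ] ℂ) :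
    1 ≤ ‖χ (W : (LaurentAlg p ⟨1, self_mem_Ici⟩ S)ˣ)‖ := by
  have h : ‖χ (W : (LaurentAlg p ⟨1, self_mem_Ici⟩ S)ˣ)‖ *
      ‖χ ((W⁻¹ : (LaurentAlg p ⟨1, self_mem_Ici⟩ S)ˣ) : LaurentAlg p ⟨1, self_mem_Ici⟩ S)‖ = 1 := by
    rw [← norm_mul, ← map_mul, Units.mul_inv, map_one, norm_one]
  have h' := norm_algHom_W_inv_le χ
  exact h.symm.le.trans (mul_le_of_le_one_right (norm_nonneg _) h')

/-- The character of the Laurent algebra that is `φ` on constants and sends `W` to `u`. -/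
def charEval (φ : S →ₐ[ℂ] ℂ) (u : ℂˣ) (hu : ∀ k : ℤ, ‖((u ^ k : ℂˣ) : ℂ)‖ ≤ annulusWeight p q k) :
    LaurentAlg p q S →ₐ[ℂ] ℂ :=
  { evalHom (φ : S →+* ℂ) (AlgHom.norm_apply_le_self φ) u hu with
    commutes' := fun c => by
      refine (evalHom_monomial (φ : S →+* ℂ) _ u hu 0 (algebraMap ℂ S c)).trans ?_
      simp }

lemma charEval_apply (φ : S →ₐ[ℂ] ℂ) (u : ℂˣ)
    (hu : ∀ k : ℤ, ‖((u ^ k : ℂˣ) : ℂ)‖ ≤ annulusWeight p q k) (a : LaurentAlg p q S) :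
    charEval φ u hu a = ∑' k, φ (a.coeff k) * ((u ^ k : ℂˣ) : ℂ) := rfl

lemma charEval_monomial (φ : S →ₐ[ℂ] ℂ) (u : ℂˣ)
    (hu : ∀ k : ℤ, ‖((u ^ k : ℂˣ) : ℂ)‖ ≤ annulusWeight p q k) (k : ℤ) (s : S) :
    charEval φ u hu (monomial k s) = φ s * ((u ^ k : ℂˣ) : ℂ) :=
  evalHom_monomial (φ : S →+* ℂ) (AlgHom.norm_apply_le_self φ) u hu k s

lemma charEval_comp_constHom (φ : S →ₐ[ℂ] ℂ) (u : ℂˣ)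
    (hu : ∀ k : ℤ, ‖((u ^ k : ℂˣ) : ℂ)‖ ≤ annulusWeight p q k) :
    (charEval φ u hu).comp constHom = φ := by
  ext s
  exact (charEval_monomial φ u hu 0 s).trans (by simp)

lemma charEval_graphFamily {ι : Type} {φ : S →ₐ[ℂ] ℂ} {t : ι → S} (ht : ∀ i, φ (t i) = 0)
    (f : Sˣ) (hu : ∀ k : ℤ, ‖(((Units.map (φ : S →* ℂ) f) ^ k : ℂˣ) : ℂ)‖ ≤ annulusWeight p q k)
    (o : Option ι) :
    charEval φ (Units.map (φ : S →* ℂ) f) hu (graphFamily t f o) = 0 := by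
  cases o with
  | none =>
    change charEval φ _ hu (monomial 1 1 - monomial 0 (f : S)) = 0
    rw [map_sub, charEval_monomial, charEval_monomial]
    simp
  | some i =>
    exact (charEval_monomial φ _ hu 0 (t i)).trans (by simp [ht])

lemma algHom_evalSelf (φ : S →ₐ[ℂ] ℂ) (f : Sˣ) (hp : ‖(f : S)‖ ≤ p)
    (hq : ‖((f⁻¹ : Sˣ) : S)‖ ≤ q) (hp' : p' ≤ p) (hq' : q' ≤ q)
    (hu : ∀ k : ℤ, ‖(((Units.map (φ : S →* ℂ) f) ^ k : ℂˣ) : ℂ)‖ ≤ annulusWeight p' q' k)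
    (a : LaurentAlg p q S) :
    φ (evalSelf f hp hq a) = charEval φ (Units.map (φ : S →* ℂ) f) hu (restrict hp' hq' a) := by
  have hcont : Continuous φ := AddMonoidHomClass.continuous_of_bound φ 1 fun s => by
    simpa using AlgHom.norm_apply_le_self φ s
  rw [evalSelf, evalHom_apply, charEval_apply, (summable_norm_eval (RingHom.id S) (fun _ => le_rfl)
    f (norm_zpow_le hp hq) a).of_norm.map_tsum φ hcont]
  refine tsum_congr fun k => ?_
  rw [map_mul, ← map_zpow]
  rfl

end LaurentAlg

/-- `e` is an idempotent modulo the ideal generated by `t`, equal to `1` on `Φ₁` and `0` on `Φ₂`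
among the characters killing `t`. -/
structure IsSeparatingIdempotent {S ι : Type} [NormedCommRing S] [NormedAlgebra ℂ S] (t : ι → S)
    (Φ₁ Φ₂ : Set (S →ₐ[ℂ] ℂ)) (e : S) : Prop where
  idem : e ^ 2 - e ∈ Ideal.span (range t)
  eq_one : ∀ φ ∈ Φ₁, (∀ i, φ (t i) = 0) → φ e = 1
  eq_zero : ∀ φ ∈ Φ₂, (∀ i, φ (t i) = 0) → φ e = 0

lemma map_eq_zero_of_mem_span_range {ι R : Type} [CommRing R] [Algebra ℂ R] {t : ι → R}
    (φ : R →ₐ[ℂ] ℂ) (ht : ∀ i, φ (t i) = 0) {x : R} (hx : x ∈ Ideal.span (range t)) : φ x = 0 := by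
  have h : Ideal.span (range t) ≤ RingHom.ker φ := by
    rw [Ideal.span_le]
    rintro _ ⟨i, rfl⟩
    exact ht i
  exact h hx

open LaurentAlg in
theorem exists_isSeparatingIdempotent (n : ℕ) : ∀ (S ι : Type) [Fintype ι] [NormedCommRing S]
    [NormedAlgebra ℂ S] [CompleteSpace S] [NormOneClass S] (t : ι → S) (f : Fin n → Sˣ)
    (Φ₁ Φ₂ : Set (S →ₐ[ℂ] ℂ)), (∀ φ : S →ₐ[ℂ] ℂ, (∀ i, φ (t i) = 0) → φ ∈ Φ₁ ∪ Φ₂) →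
    (∀ φ ∈ Φ₁, ∀ ψ ∈ Φ₂, (∀ i, φ (t i) = 0) → (∀ i, ψ (t i) = 0) →
      ∃ j, ‖φ (f j)‖ < 1 ∧ 1 < ‖ψ (f j)‖) →
    ∃ e, IsSeparatingIdempotent t Φ₁ Φ₂ e := by
  induction n with
  | zero =>
    intro S ι _ _ _ _ _ t f Φ₁ Φ₂ _ hsep
    by_cases h : ∃ φ ∈ Φ₁, ∀ i, φ (t i) = 0
    · obtain ⟨φ, hφ, hφt⟩ := h
      exact ⟨1, by simp, fun _ _ _ => map_one _, fun ψ hψ hψt =>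
        (hsep φ hφ ψ hψ hφt hψt).choose.elim0⟩
    · exact ⟨0, by simp, fun φ hφ hφt => (h ⟨φ, hφ, hφt⟩).elim, fun _ _ _ => map_zero _⟩
  | succ n ih =>
    intro S ι _ _ _ _ _ t f Φ₁ Φ₂ hcover hsep
    set g : Sˣ := f 0 with hg
    have hconst : ∀ {p q : Ici (1 : ℝ)} (χ : LaurentAlg p q S →ₐ[ℂ] ℂ),
        (∀ o, χ (graphFamily t g o) = 0) → (∀ i, χ.comp constHom (t i) = 0) ∧
          χ.comp constHom (g : S) = χ (W : (LaurentAlg p q S)ˣ) := fun χ hχ =>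
      ⟨fun i => hχ (some i), (sub_eq_zero.1 ((map_sub χ _ _).symm.trans (hχ none))).symm⟩
    have half : ∀ p q : Ici (1 : ℝ), ((∀ χ : LaurentAlg p q S →ₐ[ℂ] ℂ,
        ‖χ (W : (LaurentAlg p q S)ˣ)‖ ≤ 1) ∨ ∀ χ : LaurentAlg p q S →ₐ[ℂ] ℂ,
        1 ≤ ‖χ (W : (LaurentAlg p q S)ˣ)‖) →
        ∃ e : LaurentAlg p q S, IsSeparatingIdempotent (graphFamily t g)
          {χ | χ.comp constHom ∈ Φ₁} {χ | χ.comp constHom ∈ Φ₂} e := by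
      intro p q hW
      refine ih (LaurentAlg p q S) (Option ι) (graphFamily t g)
        (fun j => Units.map (constHom (p := p) (q := q) (S := S) : S →* LaurentAlg p q S) (f j.succ))
        _ _ (fun χ hχ => hcover _ (hconst χ hχ).1) fun χ hχ χ' hχ' hχt hχt' => ?_
      obtain ⟨j, hj⟩ := hsep _ hχ _ hχ' (hconst χ hχt).1 (hconst χ' hχt').1
      induction j using Fin.cases with
      | zero =>
        rw [← hg, (hconst χ hχt).2, (hconst χ' hχt').2] at hj
        exfalso
        rcases hW with hW | hW
        · exact (hW χ').not_gt hj.2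
        · exact (hW χ).not_gt hj.1
      | succ j => exact ⟨j, hj⟩
    set p : Ici (1 : ℝ) := ⟨max 1 ‖(g : S)‖, mem_Ici.2 (le_max_left _ _)⟩
    set q : Ici (1 : ℝ) := ⟨max 1 ‖((g⁻¹ : Sˣ) : S)‖, mem_Ici.2 (le_max_left _ _)⟩
    have hp : ‖(g : S)‖ ≤ p := le_max_right _ _
    have hq : ‖((g⁻¹ : Sˣ) : S)‖ ≤ q := le_max_right _ _
    obtain ⟨a, ha⟩ := half ⟨1, self_mem_Ici⟩ q (Or.inl norm_algHom_W_le)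
    obtain ⟨b, hb⟩ := half p ⟨1, self_mem_Ici⟩ (Or.inr one_le_norm_algHom_W)
    set Q := cousinSquare p q S
    have hA : (fun o => Q.toA (graphFamily t g o)) = graphFamily t g :=
      funext (restrict_graphFamily p.2 le_rfl t (g : S))
    have hB : (fun o => Q.toB (graphFamily t g o)) = graphFamily t g :=
      funext (restrict_graphFamily le_rfl q.2 t (g : S))
    have hZA : (fun o => Q.fromA (graphFamily t g o)) = graphFamily t g :=
      funext (restrict_graphFamily le_rfl q.2 t (g : S))
    have hZB : (fun o => Q.fromB (graphFamily t g o)) = graphFamily t g :=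
      funext (restrict_graphFamily p.2 le_rfl t (g : S))
    have hZ : (fun o => Q.fromA (Q.toA (graphFamily t g o))) = graphFamily t g :=
      funext fun o => (congrArg Q.fromA (congrFun hA o)).trans (congrFun hZA o)
    have hagree : Q.fromA a - Q.fromB b ∈ Ideal.span (range (graphFamily t g)) := by
      refine sub_mem_of_idempotents ?_ ?_ fun χ hχ => ?_
      · rw [← map_pow, ← map_sub, ← hZA]
        exact map_mem_span_range Q.fromA ha.idem
      · rw [← map_pow, ← map_sub, ← hZB]
        exact map_mem_span_range Q.fromB hb.idem
      · have hχ' : ∀ o, χ (graphFamily t g o) = 0 := fun o =>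
          hχ _ (Ideal.subset_span (mem_range_self o))
        have hχA : ∀ o, χ.comp (restrictHom le_rfl q.2) (graphFamily t g o) = 0 := fun o =>
          (congrArg χ (congrFun hZA o)).trans (hχ' o)
        have hχB : ∀ o, χ.comp (restrictHom p.2 le_rfl) (graphFamily t g o) = 0 := fun o =>
          (congrArg χ (congrFun hZB o)).trans (hχ' o)
        rcases hcover _ (hconst χ hχ').1 with h | h
        · exact (ha.eq_one (χ.comp (restrictHom le_rfl q.2)) h hχA).trans
            (hb.eq_one (χ.comp (restrictHom p.2 le_rfl)) h hχB).symm
        · exact (ha.eq_zero (χ.comp (restrictHom le_rfl q.2)) h hχA).trans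
            (hb.eq_zero (χ.comp (restrictHom p.2 le_rfl)) h hχB).symm
    obtain ⟨e, he, hea, heb⟩ := Q.exists_idempotent_lift (t := graphFamily t g)
      (fun x hx => by
        have h2 : (2 : ℂ) • x = 0 := by rw [two_smul, hx]
        simpa using h2)
      (by rw [hA]; exact ha.idem) (by rw [hB]; exact hb.idem) (by rw [hZ]; exact hagree)
    rw [hA] at hea
    rw [hB] at heb
    have hchar : ∀ φ : S →ₐ[ℂ] ℂ, (∀ i, φ (t i) = 0) →
        (∃ χ : LaurentAlg ⟨1, self_mem_Ici⟩ q S →ₐ[ℂ] ℂ, χ.comp constHom = φ ∧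
          (∀ o, χ (graphFamily t g o) = 0) ∧ φ (evalSelf g hp hq e) = χ a) ∨
        ∃ χ : LaurentAlg p ⟨1, self_mem_Ici⟩ S →ₐ[ℂ] ℂ, χ.comp constHom = φ ∧
          (∀ o, χ (graphFamily t g o) = 0) ∧ φ (evalSelf g hp hq e) = χ b := by
      intro φ hφ
      have hφp : ‖φ (g : S)‖ ≤ p := (AlgHom.norm_apply_le_self φ _).trans hp
      have hφq : ‖φ ((g⁻¹ : Sˣ) : S)‖ ≤ q := (AlgHom.norm_apply_le_self φ _).trans hq
      have hmul : ‖φ (g : S)‖ * ‖φ ((g⁻¹ : Sˣ) : S)‖ = 1 := by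
        rw [← norm_mul, ← map_mul, Units.mul_inv, map_one, norm_one]
      rcases le_total ‖φ (g : S)‖ 1 with h | h
      · left
        have hu := norm_zpow_le (p := ⟨1, self_mem_Ici⟩) (q := q)
          (u := Units.map (φ : S →* ℂ) g) h hφq
        refine ⟨charEval φ _ hu, charEval_comp_constHom φ _ hu, charEval_graphFamily hφ g hu, ?_⟩
        rw [algHom_evalSelf φ g hp hq p.2 le_rfl hu, ← sub_eq_zero, ← map_sub]
        exact map_eq_zero_of_mem_span_range _ (charEval_graphFamily hφ g hu) hea
      · right
        have h' : ‖φ ((g⁻¹ : Sˣ) : S)‖ ≤ 1 :=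
          (le_mul_of_one_le_left (norm_nonneg _) h).trans hmul.le
        have hu := norm_zpow_le (p := p) (q := ⟨1, self_mem_Ici⟩)
          (u := Units.map (φ : S →* ℂ) g) hφp h'
        refine ⟨charEval φ _ hu, charEval_comp_constHom φ _ hu, charEval_graphFamily hφ g hu, ?_⟩
        rw [algHom_evalSelf φ g hp hq le_rfl q.2 hu, ← sub_eq_zero, ← map_sub]
        exact map_eq_zero_of_mem_span_range _ (charEval_graphFamily hφ g hu) heb
    refine ⟨evalSelf g hp hq e, ?_, fun φ hφ hφt => ?_, fun φ hφ hφt => ?_⟩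
    · rw [← map_pow, ← map_sub]
      refine Ideal.span_le.2 ?_ (map_mem_span_range (evalSelf g hp hq) he)
      rintro _ ⟨o, rfl⟩
      exact evalSelf_graphFamily_mem t g hp hq o
    · rcases hchar φ hφt with ⟨χ, rfl, hχ, h⟩ | ⟨χ, rfl, hχ, h⟩
      · exact h.trans (ha.eq_one χ hφ hχ)
      · exact h.trans (hb.eq_one χ hφ hχ)
    · rcases hchar φ hφt with ⟨χ, rfl, hχ, h⟩ | ⟨χ, rfl, hχ, h⟩
      · exact h.trans (ha.eq_zero χ hφ hχ)
      · exact h.trans (hb.eq_zero χ hφ hχ)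

lemma exists_unit_norm_algHom {S : Type} [NormedCommRing S] [NormedAlgebra ℂ S] [CompleteSpace S]
    [NormOneClass S] (x : S) :
    ∃ u : Sˣ, ∀ φ : S →ₐ[ℂ] ℂ, ‖φ u‖ = Real.exp (φ x).re := by
  let : NormedAlgebra ℚ S := NormedAlgebra.restrictScalars ℚ ℂ S
  obtain ⟨u, hu⟩ := NormedSpace.isUnit_exp x
  refine ⟨u, fun φ => ?_⟩
  have hcont : Continuous φ := AddMonoidHomClass.continuous_of_bound φ 1 fun s => by
    simpa using AlgHom.norm_apply_le_self φ s
  rw [hu, NormedSpace.map_exp φ hcont, ← Complex.exp_eq_exp_ℂ, Complex.norm_exp]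

/-- If the joint spectrum of `z` is the disjoint union of two compact sets, some element of the
algebra has Gelfand transform `1` over the first and `0` over the second. -/
theorem exists_algHom_eq_one_eq_zero {n : ℕ} {S : Type} [NormedCommRing S] [NormedAlgebra ℂ S]
    [CompleteSpace S] [NormOneClass S] (z : Fin n → S) {K₁ K₂ : Set (EuclideanSpace ℂ (Fin n))}
    (hK₁ : IsCompact K₁) (hK₂ : IsCompact K₂) (hdisj : Disjoint K₁ K₂)
    (hcover : ∀ φ : S →ₐ[ℂ] ℂ, WithLp.toLp 2 (fun i => φ (z i)) ∈ K₁ ∪ K₂) :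
    ∃ e : S, (∀ φ : S →ₐ[ℂ] ℂ, WithLp.toLp 2 (fun i => φ (z i)) ∈ K₁ → φ e = 1) ∧
      ∀ φ : S →ₐ[ℂ] ℂ, WithLp.toLp 2 (fun i => φ (z i)) ∈ K₂ → φ e = 0 := by
  let U : Fin n × ℂ × ℝ → Set (EuclideanSpace ℂ (Fin n) × EuclideanSpace ℂ (Fin n)) := fun k =>
    {x | (k.2.1 * x.1 k.1).re < k.2.2 ∧ k.2.2 < (k.2.1 * x.2 k.1).re}
  have hU : ∀ k, IsOpen (U k) := fun k =>
    (isOpen_lt (f := fun x : EuclideanSpace ℂ (Fin n) × EuclideanSpace ℂ (Fin n) =>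
      (k.2.1 * x.1 k.1).re) (by fun_prop) continuous_const).inter
      (isOpen_lt (g := fun x : EuclideanSpace ℂ (Fin n) × EuclideanSpace ℂ (Fin n) =>
      (k.2.1 * x.2 k.1).re) continuous_const (by fun_prop))
  have hKU : K₁ ×ˢ K₂ ⊆ ⋃ k, U k := by
    rintro ⟨x, y⟩ ⟨hx, hy⟩
    have hne : x ≠ y := fun h => disjoint_left.1 hdisj hx (h ▸ hy)
    obtain ⟨j, hj⟩ : ∃ j, x j ≠ y j := by
      by_contra! h
      exact hne (PiLp.ext h)
    have hpos : 0 < Complex.normSq (y j - x j) := Complex.normSq_pos.2 (sub_ne_zero.2 hj.symm)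
    have hre : (starRingEnd ℂ (y j - x j) * y j).re - (starRingEnd ℂ (y j - x j) * x j).re =
        Complex.normSq (y j - x j) := by
      rw [← Complex.sub_re, ← mul_sub, mul_comm, Complex.mul_conj, Complex.ofReal_re]
    refine mem_iUnion.2 ⟨(j, starRingEnd ℂ (y j - x j),
      ((starRingEnd ℂ (y j - x j) * x j).re + (starRingEnd ℂ (y j - x j) * y j).re) / 2), ?_, ?_⟩
    · change (starRingEnd ℂ (y j - x j) * x j).re < _ / 2
      linarith
    · change _ / 2 < (starRingEnd ℂ (y j - x j) * y j).re
      linarith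
  obtain ⟨T, hT⟩ := (hK₁.prod hK₂).elim_finite_subcover U hU hKU
  choose u hu using exists_unit_norm_algHom (S := S)
  obtain ⟨e, he⟩ := exists_isSeparatingIdempotent T.card S Empty Empty.elim
    (fun k => u ((T.equivFin.symm k).1.2.1 • z (T.equivFin.symm k).1.1 -
      algebraMap ℂ S (T.equivFin.symm k).1.2.2))
    {φ | WithLp.toLp 2 (fun i => φ (z i)) ∈ K₁} {φ | WithLp.toLp 2 (fun i => φ (z i)) ∈ K₂}
    (fun φ _ => hcover φ) fun φ hφ ψ hψ _ _ => by
      obtain ⟨k, hk, h1, h2⟩ := mem_iUnion₂.1 (hT (mk_mem_prod hφ hψ))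
      refine ⟨T.equivFin ⟨k, hk⟩, ?_⟩
      simp only [hu, Equiv.symm_apply_apply, map_sub, map_smul, AlgHomClass.commutes, smul_eq_mul,
        Complex.sub_re, Real.exp_lt_one_iff, Real.one_lt_exp_iff, sub_neg, sub_pos]
      exact ⟨h1, h2⟩
  exact ⟨e, fun φ hφ => he.eq_one φ hφ fun i => i.elim, fun φ hφ => he.eq_zero φ hφ fun i => i.elim⟩

section PolynomialHull

variable {n : ℕ} {K L : Set (EuclideanSpace ℂ (Fin n))}

lemma continuous_eval_coords (p : MvPolynomial (Fin n) ℂ) :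
    Continuous fun x : EuclideanSpace ℂ (Fin n) => eval (fun i => x i) p :=
  p.continuous_eval.comp (by fun_prop)

lemma bddAbove_norm_eval (hK : IsCompact K) (p : MvPolynomial (Fin n) ℂ) :
    BddAbove ((fun w => ‖eval (fun i => w i) p‖) '' K) :=
  hK.bddAbove_image (continuous_eval_coords p).norm.continuousOn

lemma norm_eval_le_sSup (hK : IsCompact K) (p : MvPolynomial (Fin n) ℂ)
    {x : EuclideanSpace ℂ (Fin n)} (hx : x ∈ K) :
    ‖eval (fun i => x i) p‖ ≤ sSup ((fun w => ‖eval (fun i => w i) p‖) '' K) :=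
  le_csSup (bddAbove_norm_eval hK p) (mem_image_of_mem _ hx)

lemma sSup_norm_eval_nonneg (K : Set (EuclideanSpace ℂ (Fin n))) (p : MvPolynomial (Fin n) ℂ) :
    0 ≤ sSup ((fun w => ‖eval (fun i => w i) p‖) '' K) :=
  Real.sSup_nonneg (by rintro _ ⟨w, _, rfl⟩; exact norm_nonneg _)

lemma subset_polyHull (hK : IsCompact K) : K ⊆ polyHull K :=
  fun _ hx p => norm_eval_le_sSup hK p hx

lemma nonempty_of_mem_polyHull {z : EuclideanSpace ℂ (Fin n)} (hz : z ∈ polyHull K) :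
    K.Nonempty := by
  by_contra h
  have := hz 1
  simp [not_nonempty_iff_eq_empty.1 h] at this
  linarith

lemma polyHull_mono (hL : IsCompact L) (h : K ⊆ L) : polyHull K ⊆ polyHull L := fun _ hz p =>
  (hz p).trans (csSup_le_csSup (bddAbove_norm_eval hL p)
    ((nonempty_of_mem_polyHull hz).image _) (image_mono h))

/-- On a polynomially convex set, the indicator function of a clopen part is a uniform limit of
polynomials. -/
theorem exists_polynomial_approx {K₁ K₂ : Set (EuclideanSpace ℂ (Fin n))}
    (hK₁ : IsCompact K₁) (hK₂ : IsCompact K₂) (hdisj : Disjoint K₁ K₂)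
    (hne : (K₁ ∪ K₂).Nonempty) (hpc : IsPolyConvex (K₁ ∪ K₂)) {ε : ℝ} (hε : 0 < ε) :
    ∃ r : MvPolynomial (Fin n) ℂ, (∀ x ∈ K₁, ‖eval (fun i => x i) r - 1‖ ≤ ε) ∧
      ∀ x ∈ K₂, ‖eval (fun i => x i) r‖ ≤ ε := by
  set K := K₁ ∪ K₂
  have hK : IsCompact K := hK₁.union hK₂
  have : CompactSpace K := isCompact_iff_compactSpace.1 hK
  have : Nonempty K := hne.to_subtype
  let coord : Fin n → C(K, ℂ) := fun i => ⟨fun x => (x : EuclideanSpace ℂ (Fin n)) i, by fun_prop⟩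
  let A : Subalgebra ℂ C(K, ℂ) := (aeval coord).range.topologicalClosure
  have : CompleteSpace A :=
    (Subalgebra.isClosed_topologicalClosure (aeval coord).range).completeSpace_coe
  have : NormOneClass A := ⟨norm_one (α := C(K, ℂ))⟩
  have hmem : ∀ p : MvPolynomial (Fin n) ℂ, aeval coord p ∈ A := fun p =>
    Subalgebra.le_topologicalClosure _ ⟨p, rfl⟩
  let zA : Fin n → A := fun i => ⟨coord i, by simpa using hmem (X i)⟩
  have hcoe : ∀ p : MvPolynomial (Fin n) ℂ, ((aeval zA p : A) : C(K, ℂ)) = aeval coord p :=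
    fun p => by
      exact comp_aeval_apply zA A.val p
  have heval : ∀ (p : MvPolynomial (Fin n) ℂ) (x : K),
      aeval coord p x = eval (fun i => (x : EuclideanSpace ℂ (Fin n)) i) p := fun p x => by
    refine (comp_aeval_apply coord (ContinuousMap.evalAlgHom ℂ ℂ x) p).trans ?_
    rw [aeval_eq_eval]
    rfl
  have hcover : ∀ φ : A →ₐ[ℂ] ℂ, WithLp.toLp 2 (fun i => φ (zA i)) ∈ K := fun φ => by
    refine hpc.subset fun p => ?_
    have h : eval (fun i => φ (zA i)) p = φ (aeval zA p) := by
      rw [comp_aeval_apply, aeval_eq_eval]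
    change ‖eval (fun i => φ (zA i)) p‖ ≤ _
    rw [h]
    refine (AlgHom.norm_apply_le_self φ _).trans ?_
    change ‖((aeval zA p : A) : C(K, ℂ))‖ ≤ _
    rw [hcoe, ContinuousMap.norm_le _ (sSup_norm_eval_nonneg K p)]
    intro x
    rw [heval]
    exact norm_eval_le_sSup hK p x.2
  obtain ⟨e, he1, he0⟩ := exists_algHom_eq_one_eq_zero zA hK₁ hK₂ hdisj hcover
  let ev : K → (A →ₐ[ℂ] ℂ) := fun x => (ContinuousMap.evalAlgHom ℂ ℂ x).comp A.val
  obtain ⟨_, ⟨r, rfl⟩, hr⟩ := Metric.mem_closure_iff.1 e.2 ε hε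
  have hclose : ∀ x : K, ‖(e : C(K, ℂ)) x - eval (fun i => (x : EuclideanSpace ℂ (Fin n)) i) r‖ ≤
      ε := fun x => by
    rw [← heval, ← dist_eq_norm]
    exact (ContinuousMap.dist_apply_le_dist x).trans hr.le
  refine ⟨r, fun x hx => ?_, fun x hx => ?_⟩
  · have h := hclose ⟨x, Or.inl hx⟩
    rw [show (e : C(K, ℂ)) ⟨x, Or.inl hx⟩ = 1 from he1 (ev ⟨x, Or.inl hx⟩) hx] at h
    rwa [norm_sub_rev]
  · have h := hclose ⟨x, Or.inr hx⟩
    rw [show (e : C(K, ℂ)) ⟨x, Or.inr hx⟩ = 0 from he0 (ev ⟨x, Or.inr hx⟩) hx] at h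
    simpa using h

end PolynomialHull

/-- If `K₁` and `K₂` are disjoint compact subsets of `ℂⁿ` such that `K₁ ∪ K₂` is polynomially
convex, then for any compact polynomially convex subset `K₁' ⊆ K₁`, the union `K₁' ∪ K₂` is also
polynomially convex. -/
theorem stmt_0 (n : ℕ) (K₁ K₂ K₁' : Set (EuclideanSpace ℂ (Fin n)))
    (hK₁ : IsCompact K₁) (hK₂ : IsCompact K₂) (hdisj : Disjoint K₁ K₂)
    (hpc : IsPolyConvex (K₁ ∪ K₂)) (hsub : K₁' ⊆ K₁) (hK₁'c : IsCompact K₁')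
    (hK₁'pc : IsPolyConvex K₁') :
    IsPolyConvex (K₁' ∪ K₂) := by
  refine Subset.antisymm (fun z hz => ?_) (subset_polyHull (hK₁'c.union hK₂))
  have hzK : z ∈ K₁ ∪ K₂ :=
    hpc ▸ polyHull_mono (hK₁.union hK₂) (union_subset_union_left K₂ hsub) hz
  refine hzK.imp_left fun hz₁ => ?_
  by_contra hz₁'
  obtain ⟨p, hp⟩ : ∃ p : MvPolynomial (Fin n) ℂ,
      sSup ((fun w => ‖eval (fun i => w i) p‖) '' K₁') < ‖eval (fun i => z i) p‖ := by
    by_contra! h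
    exact hz₁' (hK₁'pc.subset h)
  have hs := sSup_norm_eval_nonneg K₁' p
  have hM := sSup_norm_eval_nonneg K₂ p
  have hsle := fun w (hw : w ∈ K₁') => norm_eval_le_sSup hK₁'c p hw
  have hMle := fun w (hw : w ∈ K₂) => norm_eval_le_sSup hK₂ p hw
  set s := sSup ((fun w => ‖eval (fun i => w i) p‖) '' K₁')
  set M := sSup ((fun w => ‖eval (fun i => w i) p‖) '' K₂)
  set m := ‖eval (fun i => z i) p‖ with hm
  obtain ⟨ε, hε, hεs⟩ : ∃ ε : ℝ, 0 < ε ∧ ε * (m + s + M) < m - s :=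
    exists_pos_mul_lt (sub_pos.2 hp) (m + s + M) |>.imp fun ε h => ⟨h.1, by linarith [h.2]⟩
  obtain ⟨r, hr₁, hr₂⟩ := exists_polynomial_approx hK₁ hK₂ hdisj ⟨z, hzK⟩ hpc hε
  have hupper : sSup ((fun w => ‖eval (fun i => w i) (p * r)‖) '' (K₁' ∪ K₂)) ≤
      s + ε * (s + M) := by
    refine csSup_le ((nonempty_of_mem_polyHull hz).image _) ?_
    rintro _ ⟨w, hw | hw, rfl⟩
    · have h : ‖eval (fun i => w i) r‖ ≤ 1 + ε := by
        have := norm_le_norm_add_norm_sub' (eval (fun i => w i) r) 1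
        rw [norm_one] at this
        linarith [hr₁ w (hsub hw)]
      simp only [map_mul, norm_mul]
      nlinarith [mul_le_mul (hsle w hw) h (norm_nonneg _) hs, mul_nonneg hε.le hM]
    · simp only [map_mul, norm_mul]
      nlinarith [mul_le_mul (hMle w hw) (hr₂ w hw) (norm_nonneg _) hM, mul_nonneg hε.le hs]
  have hlower : m * (1 - ε) ≤ ‖eval (fun i => z i) (p * r)‖ := by
    rw [map_mul, norm_mul]
    refine mul_le_mul_of_nonneg_left ?_ (norm_nonneg _)
    have := norm_le_norm_add_norm_sub (eval (fun i => z i) r) 1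
    rw [norm_one] at this
    linarith [hr₁ z hz₁]
  linarith [hz (p * r)]
end
end

section
/- Every compact polynomially convex set K ⊆ ℂⁿ is the zero set of a nonnegative plurisubharmonic exhaustion function ρ : ℂⁿ → [0, ∞) which is strongly plurisubharmonic on ℂⁿ \ K. -/
noncomputable section
open Set Metric MvPolynomial

/-- A function `u : ℂ → ℝ` is subharmonic on an open set `U ⊆ ℂ`: it is upper semicontinuous on
`U` and satisfies the sub-mean value inequality over circles whose closed discs lie in `U`. -/
def SubharmonicOnC (u : ℂ → ℝ) (U : Set ℂ) : Prop :=
  UpperSemicontinuousOn u U ∧ ∀ c : ℂ, ∀ r : ℝ, 0 < r → closedBall c r ⊆ U →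
    u c ≤ (2 * Real.pi)⁻¹ * ∫ θ in (0:ℝ)..(2 * Real.pi), u (c + r * Complex.exp (θ * Complex.I))

/-- `ρ` is plurisubharmonic on `U ⊆ ℂⁿ`: upper semicontinuous on `U` and subharmonic on every
complex line. -/
def PshOn {n : ℕ} (ρ : EuclideanSpace ℂ (Fin n) → ℝ) (U : Set (EuclideanSpace ℂ (Fin n))) :
    Prop :=
  UpperSemicontinuousOn ρ U ∧ ∀ a b : EuclideanSpace ℂ (Fin n),
    SubharmonicOnC (fun t : ℂ => ρ (a + t • b)) {t : ℂ | a + t • b ∈ U}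

/-- `ρ` is strongly plurisubharmonic on the open set `U`: near every point of `U` one may
subtract a small positive multiple of `‖·‖²` and stay plurisubharmonic. -/
def StronglyPshOn {n : ℕ} (ρ : EuclideanSpace ℂ (Fin n) → ℝ)
    (U : Set (EuclideanSpace ℂ (Fin n))) : Prop :=
  ∀ x ∈ U, ∃ ε : ℝ, 0 < ε ∧ ∃ V : Set (EuclideanSpace ℂ (Fin n)),
    IsOpen V ∧ x ∈ V ∧ V ⊆ U ∧ PshOn (fun z => ρ z - ε * ‖z - x‖ ^ 2) V

/-- `ρ` is an exhaustion function: all sublevel sets are compact. -/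
def IsExhaustion {n : ℕ} (ρ : EuclideanSpace ℂ (Fin n) → ℝ) : Prop :=
  ∀ c : ℝ, IsCompact {z : EuclideanSpace ℂ (Fin n) | ρ z ≤ c}

/-- A continuous function on `ℂ` satisfying the sub-mean value inequality on one circle. -/
def SubMeanAt (u : ℂ → ℝ) (c : ℂ) (r : ℝ) : Prop :=
  Continuous u ∧ u c ≤ Real.circleAverage u c r

namespace SubMeanAt

variable {u v : ℂ → ℝ} {c : ℂ} {r : ℝ}

lemma circleIntegrable (hu : Continuous u) : CircleIntegrable u c r :=
  (hu.comp (continuous_circleMap c r)).intervalIntegrable _ _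

lemma const (a : ℝ) : SubMeanAt (fun _ => a) c r :=
  ⟨continuous_const, (Real.circleAverage_const a c r).ge⟩

lemma add (hu : SubMeanAt u c r) (hv : SubMeanAt v c r) :
    SubMeanAt (fun t => u t + v t) c r := by
  refine ⟨hu.1.add hv.1, ?_⟩
  rw [Real.circleAverage_fun_add (circleIntegrable hu.1) (circleIntegrable hv.1)]
  exact add_le_add hu.2 hv.2

lemma const_mul {a : ℝ} (ha : 0 ≤ a) (hu : SubMeanAt u c r) :
    SubMeanAt (fun t => a * u t) c r := by
  refine ⟨continuous_const.mul hu.1, ?_⟩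
  have h : Real.circleAverage (fun t => a * u t) c r = a * Real.circleAverage u c r :=
    Real.circleAverage_fun_smul (a := a) (f := u)
  rw [h]
  exact mul_le_mul_of_nonneg_left hu.2 ha

lemma sum {ι : Type*} (s : Finset ι) {u : ι → ℂ → ℝ} (hu : ∀ i ∈ s, SubMeanAt (u i) c r) :
    SubMeanAt (fun t => ∑ i ∈ s, u i t) c r := by
  refine ⟨continuous_finsetSum s fun i hi => (hu i hi).1, ?_⟩
  rw [Real.circleAverage_fun_sum fun i hi => circleIntegrable (hu i hi).1]
  exact Finset.sum_le_sum fun i hi => (hu i hi).2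

lemma of_le (hu : Continuous u) (hv : SubMeanAt v c r) (hvu : ∀ t, v t ≤ u t)
    (hc : u c ≤ v c) : SubMeanAt u c r :=
  ⟨hu, hc.trans <| hv.2.trans <| Real.circleAverage_mono (circleIntegrable hv.1)
    (circleIntegrable hu) fun t _ => hvu t⟩

lemma of_tendsto {ι : Type*} {l : Filter ι} [l.NeBot] {v : ι → ℂ → ℝ} (hu : Continuous u)
    (hv : ∀ᶠ i in l, SubMeanAt (v i) c r) (hvu : ∀ i t, v i t ≤ u t)
    (hc : Filter.Tendsto (fun i => v i c) l (nhds (u c))) : SubMeanAt u c r := by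
  refine ⟨hu, le_of_tendsto hc ?_⟩
  filter_upwards [hv] with i hi
  exact hi.2.trans <| Real.circleAverage_mono (circleIntegrable hi.1)
    (circleIntegrable hu) fun t _ => hvu i t

lemma max_zero (hu : SubMeanAt u c r) : SubMeanAt (fun t => max 0 (u t)) c r := by
  have hm : Continuous fun t => max 0 (u t) := continuous_const.max hu.1
  rcases le_total 0 (u c) with h | h
  · exact of_le hm hu (fun t => le_max_right _ _) (max_le h le_rfl)
  · exact of_le hm (const 0) (fun t => le_max_left _ _) (max_le le_rfl h)

lemma norm_of_differentiable {h : ℂ → ℂ} (hh : Differentiable ℂ h) :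
    SubMeanAt (fun t => ‖h t‖) c r := by
  refine ⟨hh.continuous.norm, ?_⟩
  have hmean : Real.circleAverage h c r = h c := hh.diffContOnCl.circleAverage
  have hpi := Real.two_pi_pos
  calc ‖h c‖ = ‖Real.circleAverage h c r‖ := by rw [hmean]
    _ ≤ Real.circleAverage (fun t => ‖h t‖) c r := by
      rw [Real.circleAverage, Real.circleAverage, norm_smul, Real.norm_of_nonneg (by positivity),
        smul_eq_mul]
      gcongr
      exact intervalIntegral.norm_integral_le_integral_norm hpi.le

lemma norm_sq_line {n : ℕ} (a b : EuclideanSpace ℂ (Fin n)) :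
    SubMeanAt (fun t : ℂ => ‖a + t • b‖ ^ 2) c r := by
  have h : (fun t : ℂ => ‖a + t • b‖ ^ 2) = fun t => ∑ i, ‖(a i + t * b i) ^ 2‖ := by
    funext t
    simp [EuclideanSpace.norm_sq_eq]
  rw [h]
  exact sum _ fun i _ => norm_of_differentiable (by fun_prop)

end SubMeanAt

section Polynomial

variable {n : ℕ}

lemma differentiable_eval_line (p : MvPolynomial (Fin n) ℂ) (a b : EuclideanSpace ℂ (Fin n)) :
    Differentiable ℂ fun t : ℂ => eval (fun i => (a + t • b) i) p := by
  induction p using MvPolynomial.induction_on with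
  | C x => simp
  | add p q hp hq =>
    simp only [map_add]
    exact hp.add hq
  | mul_X p i hp =>
    simp only [map_mul, eval_X]
    refine hp.mul ?_
    simp only [PiLp.add_apply, PiLp.smul_apply, smul_eq_mul]
    fun_prop

lemma continuous_eval_euclidean (p : MvPolynomial (Fin n) ℂ) :
    Continuous fun z : EuclideanSpace ℂ (Fin n) => eval (fun i => z i) p :=
  (MvPolynomial.continuous_eval p).comp (by fun_prop)

/-- The function `|p| + δ‖·‖² - C`, strongly plurisubharmonic for `δ > 0`. -/
def polyBarrier (p : MvPolynomial (Fin n) ℂ) (δ C : ℝ) (z : EuclideanSpace ℂ (Fin n)) : ℝ :=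
  ‖eval (fun i => z i) p‖ + δ * ‖z‖ ^ 2 - C

lemma continuous_polyBarrier (p : MvPolynomial (Fin n) ℂ) (δ C : ℝ) :
    Continuous (polyBarrier p δ C) := by
  have := continuous_eval_euclidean p
  unfold polyBarrier
  fun_prop

lemma subMeanAt_polyBarrier (p : MvPolynomial (Fin n) ℂ) {δ : ℝ} (hδ : 0 ≤ δ) (C : ℝ)
    (a b : EuclideanSpace ℂ (Fin n)) (c : ℂ) (r : ℝ) :
    SubMeanAt (fun t : ℂ => polyBarrier p δ C (a + t • b)) c r := by
  simpa only [polyBarrier, sub_eq_add_neg] using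
    ((SubMeanAt.norm_of_differentiable (differentiable_eval_line p a b)).add
      ((SubMeanAt.norm_sq_line a b).const_mul hδ)).add (SubMeanAt.const (-C))

/-- By the parallelogram law, half of the quadratic term can be recentred at any point. -/
lemma polyBarrier_sub_norm_sq (p : MvPolynomial (Fin n) ℂ) (δ C : ℝ)
    (x z : EuclideanSpace ℂ (Fin n)) :
    polyBarrier p δ C z - δ / 2 * ‖z - x‖ ^ 2 =
      ‖eval (fun i => z i) p‖ + δ / 2 * ‖x + z‖ ^ 2 + -(δ * ‖x‖ ^ 2 + C) := by
  have h := parallelogram_law_with_norm ℂ z x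
  rw [polyBarrier, add_comm x z]
  linear_combination (-δ / 2) * h

lemma subMeanAt_polyBarrier_sub_norm_sq (p : MvPolynomial (Fin n) ℂ) {δ : ℝ} (hδ : 0 ≤ δ)
    (C : ℝ) (x a b : EuclideanSpace ℂ (Fin n)) (c : ℂ) (r : ℝ) :
    SubMeanAt (fun t : ℂ => polyBarrier p δ C (a + t • b) - δ / 2 * ‖a + t • b - x‖ ^ 2) c r := by
  simp only [polyBarrier_sub_norm_sq, ← add_assoc x a]
  exact ((SubMeanAt.norm_of_differentiable (differentiable_eval_line p a b)).add
      ((SubMeanAt.norm_sq_line (x + a) b).const_mul (by positivity))).add (SubMeanAt.const _)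

/-- A point outside a compact polynomially convex set is separated from it by a barrier. -/
lemma exists_polyBarrier_pos {K : Set (EuclideanSpace ℂ (Fin n))} (hKc : IsCompact K)
    (hKpc : IsPolyConvex K) {x : EuclideanSpace ℂ (Fin n)} (hx : x ∉ K) :
    ∃ p : MvPolynomial (Fin n) ℂ, ∃ δ C : ℝ, 0 < δ ∧ (∀ z ∈ K, polyBarrier p δ C z ≤ 0) ∧
      0 < polyBarrier p δ C x := by
  obtain ⟨R, hR⟩ := hKc.isBounded.exists_norm_le
  rw [← hKpc, polyHull, mem_ofPred_eq] at hx
  push Not at hx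
  obtain ⟨p, hp⟩ := hx
  set s := sSup ((fun w : EuclideanSpace ℂ (Fin n) => ‖eval (fun i => w i) p‖) '' K)
  set q := ‖eval (fun i => x i) p‖
  have hδ : 0 < (q - s) / (R ^ 2 + 1) := div_pos (by linarith) (by positivity)
  have hδR : (q - s) / (R ^ 2 + 1) * R ^ 2 < q - s := by
    rw [div_mul_eq_mul_div, div_lt_iff₀ (by positivity)]
    nlinarith
  refine ⟨p, (q - s) / (R ^ 2 + 1), s + (q - s) / (R ^ 2 + 1) * R ^ 2, hδ, fun z hz => ?_, ?_⟩
  · have h1 : ‖eval (fun i => z i) p‖ ≤ s :=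
      le_csSup (hKc.image (continuous_eval_euclidean p).norm).bddAbove ⟨z, hz, rfl⟩
    have h2 : ‖z‖ ^ 2 ≤ R ^ 2 := pow_le_pow_left₀ (norm_nonneg z) (hR z hz) 2
    have h3 := mul_le_mul_of_nonneg_left h2 hδ.le
    unfold polyBarrier
    linarith
  · have h4 : 0 ≤ (q - s) / (R ^ 2 + 1) * ‖x‖ ^ 2 := by positivity
    unfold polyBarrier
    linarith

end Polynomial

/-- Countably many nonnegative continuous functions on a proper space can be scaled by positive
weights so that their sum converges to a continuous function. -/
lemma exists_pos_weights_continuous_tsum {E : Type*} [NormedAddCommGroup E] [ProperSpace E]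
    {u : ℕ → E → ℝ} (hu : ∀ j, Continuous (u j)) (hnn : ∀ j z, 0 ≤ u j z) :
    ∃ w : ℕ → ℝ, (∀ j, 0 < w j) ∧ (∀ z, Summable fun j => w j * u j z) ∧
      Continuous fun z => ∑' j, w j * u j z := by
  have hbdd (j : ℕ) (R : ℝ) : ∃ M, 0 ≤ M ∧ ∀ z ∈ closedBall (0 : E) R, u j z ≤ M := by
    obtain ⟨M, hM⟩ := ((isCompact_closedBall (0 : E) R).image (hu j)).bddAbove
    exact ⟨max 0 M, le_max_left _ _, fun z hz => (hM ⟨z, hz, rfl⟩).trans (le_max_right _ _)⟩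
  choose M hM0 hM using fun j : ℕ => hbdd j j
  set w : ℕ → ℝ := fun j => (1 / 2) ^ j / (1 + M j)
  have hw (j : ℕ) : 0 < w j := by have := hM0 j; positivity
  have htail (j : ℕ) (z : E) (hz : ‖z‖ ≤ j) : w j * u j z ≤ (1 / 2) ^ j := by
    have h1 := hM j z (by simpa using hz)
    have h0 := hM0 j
    rw [div_mul_eq_mul_div, div_le_iff₀ (by positivity)]
    gcongr
    linarith
  have hgeom : Summable fun j : ℕ => ((1 : ℝ) / 2) ^ j := summable_geometric_two
  refine ⟨w, hw, fun z => ?_, ?_⟩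
  · refine hgeom.of_norm_bounded_eventually_nat ?_
    filter_upwards [Filter.eventually_ge_atTop ⌈‖z‖⌉₊] with j hj
    rw [Real.norm_of_nonneg (mul_nonneg (hw j).le (hnn j z))]
    exact htail j z (Nat.ceil_le.mp hj)
  · have hball (k : ℕ) : ContinuousOn (fun z => ∑' j, w j * u j z) (ball 0 k) := by
      choose N hN0 hN using fun j : ℕ => hbdd j k
      refine continuousOn_tsum
        (u := fun j => if k ≤ j then ((1 : ℝ) / 2) ^ j else w j * N j)
        (fun j => (continuous_const.mul (hu j)).continuousOn) ?_ fun j z hz => ?_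
      · refine hgeom.of_norm_bounded_eventually_nat ?_
        filter_upwards [Filter.eventually_ge_atTop k] with j hj
        rw [if_pos hj, Real.norm_of_nonneg (by positivity)]
      · rw [Real.norm_of_nonneg (mul_nonneg (hw j).le (hnn j z))]
        have hz' : ‖z‖ < k := by simpa using hz
        split_ifs with h
        · exact htail j z (hz'.le.trans (by exact_mod_cast h))
        · exact mul_le_mul_of_nonneg_left (hN j z (ball_subset_closedBall hz)) (hw j).le
    refine continuous_iff_continuousAt.mpr fun z => ?_
    obtain ⟨k, hk⟩ := exists_nat_gt ‖z‖
    exact (hball k).continuousAt (isOpen_ball.mem_nhds (by simpa using hk))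

lemma pshOn_of_subMeanAt {n : ℕ} {f : EuclideanSpace ℂ (Fin n) → ℝ}
    {U : Set (EuclideanSpace ℂ (Fin n))} (hf : Continuous f)
    (h : ∀ a b c r, a + c • b ∈ U → SubMeanAt (fun t : ℂ => f (a + t • b)) c r) :
    PshOn f U :=
  ⟨hf.upperSemicontinuous.upperSemicontinuousOn U, fun a b =>
    ⟨((hf.comp (by fun_prop : Continuous fun t : ℂ => a + t • b)).upperSemicontinuous
        ).upperSemicontinuousOn _,
      fun c r hr hcr => (h a b c r (hcr (mem_closedBall_self hr.le))).2⟩⟩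

/-- A countable family of barriers, nonpositive on `K`, one of which is positive at any given
point outside `K`. -/
lemma exists_polyBarrier_seq {n : ℕ} {K : Set (EuclideanSpace ℂ (Fin n))} (hKc : IsCompact K)
    (hKpc : IsPolyConvex K) :
    ∃ (p : ℕ → MvPolynomial (Fin n) ℂ) (δ C : ℕ → ℝ), (∀ j, 0 < δ j) ∧
      (∀ j, ∀ z ∈ K, polyBarrier (p j) (δ j) (C j) z ≤ 0) ∧
      ∀ z ∉ K, ∃ j, 0 < polyBarrier (p j) (δ j) (C j) z := by
  let D := {d : MvPolynomial (Fin n) ℂ × ℝ × ℝ //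
    0 < d.2.1 ∧ ∀ z ∈ K, polyBarrier d.1 d.2.1 d.2.2 z ≤ 0}
  obtain ⟨R, hR⟩ := hKc.isBounded.exists_norm_le
  let d₀ : D := ⟨(0, 1, R ^ 2), one_pos, fun z hz => by
    have h2 : ‖z‖ ^ 2 ≤ R ^ 2 := pow_le_pow_left₀ (norm_nonneg z) (hR z hz) 2
    simpa [polyBarrier] using h2⟩
  obtain ⟨T, hT, hTU⟩ := TopologicalSpace.isOpen_iUnion_countable
    (fun d : D => {z | 0 < polyBarrier d.1.1 d.1.2.1 d.1.2.2 z})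
    fun d => isOpen_lt continuous_const (continuous_polyBarrier _ _ _)
  obtain ⟨f, hf⟩ := (hT.insert d₀).exists_eq_range (insert_nonempty d₀ T)
  refine ⟨fun j => (f j).1.1, fun j => (f j).1.2.1, fun j => (f j).1.2.2,
    fun j => (f j).2.1, fun j => (f j).2.2, fun z hz => ?_⟩
  obtain ⟨p, δ, C, hδ, hK, hpos⟩ := exists_polyBarrier_pos hKc hKpc hz
  have hmem : z ∈ ⋃ d ∈ T, {z | 0 < polyBarrier d.1.1 d.1.2.1 d.1.2.2 z} := by
    rw [hTU]
    exact mem_iUnion.mpr ⟨⟨(p, δ, C), hδ, hK⟩, hpos⟩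
  obtain ⟨d, hd, hdz⟩ := mem_iUnion₂.mp hmem
  obtain ⟨j, rfl⟩ : d ∈ range f := hf ▸ mem_insert_of_mem d₀ hd
  exact ⟨j, hdz⟩

/-- Every compact polynomially convex set `K ⊆ ℂⁿ` is the zero set of a nonnegative
plurisubharmonic exhaustion function `ρ : ℂⁿ → [0, ∞)` which is strongly plurisubharmonic on
`ℂⁿ \ K`. -/
theorem stmt_1 (n : ℕ) (K : Set (EuclideanSpace ℂ (Fin n))) (hKc : IsCompact K)
    (hKpc : IsPolyConvex K) :
    ∃ ρ : EuclideanSpace ℂ (Fin n) → ℝ, (∀ z, 0 ≤ ρ z) ∧ PshOn ρ univ ∧ IsExhaustion ρ ∧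
      {z | ρ z = 0} = K ∧ StronglyPshOn ρ Kᶜ := by
  obtain ⟨p, δ, C, hδ, hK, hsep⟩ := exists_polyBarrier_seq hKc hKpc
  set g : ℕ → EuclideanSpace ℂ (Fin n) → ℝ := fun j => polyBarrier (p j) (δ j) (C j)
  have hg (j) : Continuous (g j) := continuous_polyBarrier _ _ _
  have hgm (j) : Continuous fun z => max 0 (g j z) := continuous_const.max (hg j)
  obtain ⟨w, hw, hsum, hcont⟩ := exists_pos_weights_continuous_tsum
    (u := fun j z => max 0 (g j z)) hgm fun j z => le_max_left _ _
  set ρ : EuclideanSpace ℂ (Fin n) → ℝ := fun z => ∑' j, w j * max 0 (g j z)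
  have hterm (j z) : 0 ≤ w j * max 0 (g j z) := mul_nonneg (hw j).le (le_max_left _ _)
  have hle (j z) : w j * max 0 (g j z) ≤ ρ z := (hsum z).le_tsum j fun i _ => hterm i z
  have hsub (j) (a b : EuclideanSpace ℂ (Fin n)) (c : ℂ) (r : ℝ) :
      SubMeanAt (fun t : ℂ => w j * max 0 (g j (a + t • b))) c r :=
    (subMeanAt_polyBarrier (p j) (hδ j).le (C j) a b c r).max_zero.const_mul (hw j).le
  have hline (a b : EuclideanSpace ℂ (Fin n)) : Continuous fun t : ℂ => a + t • b := by fun_prop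
  refine ⟨ρ, fun z => tsum_nonneg fun j => hterm j z, ?_, fun M => ?_, ?_, fun x hx => ?_⟩
  · refine pshOn_of_subMeanAt hcont fun a b c r _ => ?_
    exact SubMeanAt.of_tendsto (hcont.comp (hline a b))
      (.of_forall fun s => SubMeanAt.sum s fun j _ => hsub j a b c r)
      (fun s t => (hsum _).sum_le_tsum s fun j _ => hterm j _) (hsum _).hasSum
  · refine isCompact_of_isClosed_isBounded (isClosed_le hcont continuous_const) ?_
    refine isBounded_iff_forall_norm_le.mpr
      ⟨(M / w 0 + C 0) / δ 0 + 1, fun z (hz : ρ z ≤ M) => ?_⟩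
    have h1 : g 0 z ≤ M / w 0 := by
      rw [le_div_iff₀' (hw 0)]
      exact (mul_le_mul_of_nonneg_left (le_max_right _ _) (hw 0).le).trans ((hle 0 z).trans hz)
    have h2 : ‖z‖ ^ 2 ≤ (M / w 0 + C 0) / δ 0 := by
      rw [le_div_iff₀' (hδ 0)]
      have h3 : ‖eval (fun i => z i) (p 0)‖ + δ 0 * ‖z‖ ^ 2 - C 0 ≤ M / w 0 := h1
      linarith [norm_nonneg (eval (fun i => z i) (p 0))]
    nlinarith [sq_nonneg (‖z‖ - 1)]
  · ext z
    refine ⟨fun hz => ?_, fun hz => ?_⟩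
    · by_contra hzK
      obtain ⟨j, hj⟩ := hsep z hzK
      have h1 : w j * max 0 (g j z) ≤ 0 := (hle j z).trans_eq hz
      exact absurd h1 (not_le.mpr (mul_pos (hw j) (lt_max_of_lt_right hj)))
    · have h0 (j) : w j * max 0 (g j z) = 0 := by rw [max_eq_left (hK j z hz), mul_zero]
      change ∑' j, w j * max 0 (g j z) = 0
      simp only [h0, tsum_zero]
  · obtain ⟨i, hi⟩ := hsep x hx
    refine ⟨w i * (δ i / 2), mul_pos (hw i) (half_pos (hδ i)), {z | 0 < g i z},
      isOpen_lt continuous_const (hg i), hi, fun z hz hzK => not_le.mpr hz (hK i z hzK), ?_⟩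
    refine pshOn_of_subMeanAt (by fun_prop) fun a b c r hc => ?_
    have hmain : SubMeanAt (fun t : ℂ => w i * max 0 (g i (a + t • b)) -
        w i * (δ i / 2) * ‖a + t • b - x‖ ^ 2) c r := by
      refine SubMeanAt.of_le (by have := (hgm i).comp (hline a b); fun_prop)
        ((subMeanAt_polyBarrier_sub_norm_sq (p i) (hδ i).le (C i) x a b c r).const_mul (hw i).le)
        (fun t => ?_) ?_
      · rw [mul_sub, ← mul_assoc]
        exact sub_le_sub_right (mul_le_mul_of_nonneg_left (le_max_right _ _) (hw i).le) _
      · rw [max_eq_right (le_of_lt hc), mul_sub, ← mul_assoc]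
    refine SubMeanAt.of_tendsto (l := Filter.atTop) (v := fun (s : Finset ℕ) t =>
        ∑ j ∈ s, w j * max 0 (g j (a + t • b)) - w i * (δ i / 2) * ‖a + t • b - x‖ ^ 2)
      (by fun_prop) ?_
      (fun s t => sub_le_sub_right ((hsum _).sum_le_tsum s fun j _ => hterm j _) _)
      ((hsum _).hasSum.sub_const _)
    filter_upwards [Filter.eventually_ge_atTop {i}] with s hs
    have his : i ∈ s := Finset.singleton_subset_iff.mp hs
    simp only [← Finset.sum_erase_add s _ his]
    simpa only [add_sub_assoc] using (SubMeanAt.sum _ fun j _ => hsub j a b c r).add hmain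
end
end

section
/- Let L ⊆ ℂᴺ and K ⊆ ℂⁿ be compact polynomially convex sets, U an open neighbourhood of L, and f : U → ℂⁿ a holomorphic map with f(z) ∉ K for all z ∈ L. Then the set S = {(z, ζ − f(z)) : z ∈ L, ζ ∈ K} ⊆ ℂ^{N+n} is polynomially convex and disjoint from ℂᴺ × {0}. -/
noncomputable section
open Set Metric MvPolynomial

open MeasureTheory Topology Filter

section CauchyRiemann

variable {ι : Type*} [Fintype ι] [DecidableEq ι]
variable {F : Type*} [NormedAddCommGroup F] [NormedSpace ℂ F]

/-- Twice the Wirtinger derivative `∂/∂w̄ⱼ`. -/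
def dbar (j : ι) (g : (ι → ℂ) → F) (w : ι → ℂ) : F :=
  fderiv ℝ g w (Pi.single j 1) + Complex.I • fderiv ℝ g w (Pi.single j Complex.I)

theorem dbar_eq_zero_of_differentiableAt {g : (ι → ℂ) → F} {w : ι → ℂ}
    (hg : DifferentiableAt ℂ g w) (j : ι) : dbar j g w = 0 := by
  have hI : (Pi.single j Complex.I : ι → ℂ) = Complex.I • Pi.single j 1 := by
    rw [← Pi.single_smul]; simp
  rw [dbar, hg.fderiv_restrictScalars ℝ]
  simp only [ContinuousLinearMap.coe_restrictScalars', hI, map_smul, smul_smul, Complex.I_mul_I]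
  simp

theorem dbar_add {g h : (ι → ℂ) → F} {w : ι → ℂ} (hg : DifferentiableAt ℝ g w)
    (hh : DifferentiableAt ℝ h w) (j : ι) :
    dbar j (fun x => g x + h x) w = dbar j g w + dbar j h w := by
  simp only [dbar, fderiv_fun_add hg hh, _root_.add_apply, smul_add]
  abel

theorem dbar_real_smul {g : (ι → ℂ) → F} {w : ι → ℂ} (hg : DifferentiableAt ℝ g w) (t : ℝ)
    (j : ι) : dbar j (fun x => t • g x) w = t • dbar j g w := by
  simp only [dbar, fderiv_fun_const_smul hg, _root_.smul_apply, smul_add]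
  rw [smul_comm]

theorem dbar_sum {κ : Type*} {s : Finset κ} {g : κ → (ι → ℂ) → F} {w : ι → ℂ}
    (hg : ∀ k ∈ s, DifferentiableAt ℝ (g k) w) (j : ι) :
    dbar j (fun x => ∑ k ∈ s, g k x) w = ∑ k ∈ s, dbar j (g k) w := by
  simp only [dbar, fderiv_fun_sum hg, _root_.sum_apply, Finset.smul_sum,
    Finset.sum_add_distrib]

theorem dbar_mul {g h : (ι → ℂ) → ℂ} {w : ι → ℂ} (hg : DifferentiableAt ℝ g w)
    (hh : DifferentiableAt ℝ h w) (j : ι) :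
    dbar j (fun x => g x * h x) w = g w * dbar j h w + dbar j g w * h w := by
  simp only [dbar, fderiv_fun_mul hg hh, _root_.add_apply,
    _root_.smul_apply, smul_eq_mul]
  ring

theorem dbar_clm_comp {F' : Type*} [NormedAddCommGroup F'] [NormedSpace ℂ F'] (T : F →L[ℂ] F')
    {g : (ι → ℂ) → F} {w : ι → ℂ} (hg : DifferentiableAt ℝ g w) (j : ι) :
    dbar j (fun x => T (g x)) w = T (dbar j g w) := by
  have h : HasFDerivAt (fun x => T (g x)) ((T.restrictScalars ℝ).comp (fderiv ℝ g w)) w :=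
    (T.restrictScalars ℝ).hasFDerivAt.comp w hg.hasFDerivAt
  simp [dbar, h.fderiv]

theorem dbar_pi_apply {g : (ι → ℂ) → ι → F} {w : ι → ℂ} (hg : DifferentiableAt ℝ g w)
    (i j : ι) : dbar j g w i = dbar j (fun x => g x i) w :=
  (dbar_clm_comp (ContinuousLinearMap.proj (R := ℂ) (φ := fun _ : ι => F) i) hg j).symm

theorem contDiff_dbar {g : (ι → ℂ) → F} (hg : ContDiff ℝ 2 g) (j : ι) :
    ContDiff ℝ 1 (dbar j g) := by
  have h := hg.fderiv_right (m := 1) (by norm_num)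
  have hc (v : ι → ℂ) : ContDiff ℝ 1 fun w => fderiv ℝ g w v := h.clm_apply contDiff_const
  have hI : ContDiff ℝ 1 fun w => Complex.I • fderiv ℝ g w (Pi.single j Complex.I) :=
    contDiff_const.smul (hc _)
  exact (hc _).add hI

theorem continuous_dbar {g : (ι → ℂ) → F} (hg : ContDiff ℝ 1 g) (j : ι) :
    Continuous (dbar j g) := by
  have h := hg.continuous_fderiv one_ne_zero
  exact (h.clm_apply continuous_const).add ((h.clm_apply continuous_const).const_smul Complex.I)

theorem dbar_dbar_comm {g : (ι → ℂ) → F} (hg : ContDiff ℝ 2 g) (w : ι → ℂ) (j k : ι) :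
    dbar j (dbar k g) w = dbar k (dbar j g) w := by
  have hsymm : IsSymmSndFDerivAt ℝ g w :=
    hg.contDiffAt.isSymmSndFDerivAt (by simp)
  have hd : DifferentiableAt ℝ (fderiv ℝ g) w :=
    ((hg.fderiv_right (m := 1) (by norm_num)).differentiable one_ne_zero) w
  have key (k : ι) (u : ι → ℂ) : fderiv ℝ (dbar k g) w u =
      fderiv ℝ (fderiv ℝ g) w u (Pi.single k 1) +
        Complex.I • fderiv ℝ (fderiv ℝ g) w u (Pi.single k Complex.I) := by
    have h1 (v : ι → ℂ) : HasFDerivAt (fun x => fderiv ℝ g x v)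
        ((fderiv ℝ (fderiv ℝ g) w).flip v) w := by
      simpa using hd.hasFDerivAt.clm_apply (hasFDerivAt_const v w)
    have h2 := (h1 (Pi.single k 1)).add ((h1 (Pi.single k Complex.I)).const_smul Complex.I)
    have h3 : HasFDerivAt (dbar k g) _ w := h2
    rw [h3.fderiv]
    simp
  rw [dbar, dbar, key, key, key, key]
  simp only [smul_add]
  rw [hsymm.eq (Pi.single j 1) (Pi.single k 1),
    hsymm.eq (Pi.single j 1) (Pi.single k Complex.I),
    hsymm.eq (Pi.single j Complex.I) (Pi.single k 1),
    hsymm.eq (Pi.single j Complex.I) (Pi.single k Complex.I)]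
  abel

theorem continuousOn_fderiv_apply_of_differentiableOn {E : Type*} [NormedAddCommGroup E]
    [NormedSpace ℂ E] [LocallyCompactSpace E] {f : E → ℂ} {U : Set E} (hU : IsOpen U)
    (hf : DifferentiableOn ℂ f U) (v : E) : ContinuousOn (fun x => fderiv ℂ f x v) U := by
  intro x₀ hx₀
  apply ContinuousAt.continuousWithinAt
  obtain ⟨K, hK, hxK, hKU⟩ := exists_compact_subset hU hx₀
  have hmap : Continuous fun q : E × ℂ => q.1 + q.2 • v := by fun_prop
  have hnhds : (fun q : E × ℂ => q.1 + q.2 • v) ⁻¹' interior K ∈ 𝓝 (x₀, (0 : ℂ)) :=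
    hmap.continuousAt.preimage_mem_nhds (by simpa using isOpen_interior.mem_nhds hxK)
  rw [nhds_prod_eq, mem_prod_iff] at hnhds
  obtain ⟨V, hV, B, hB, hVB⟩ := hnhds
  obtain ⟨δ, hδ, hδB⟩ := Metric.mem_nhds_iff.1 hB
  have hVB' : ∀ x ∈ V, ∀ t ∈ ball (0 : ℂ) δ, x + t • v ∈ U := fun x hx t ht =>
    hKU (interior_subset (hVB (Set.mk_mem_prod hx (hδB ht))))
  have hline : ∀ x t, x + t • v ∈ U → HasDerivAt (fun s : ℂ => f (x + s • v))
      (fderiv ℂ f (x + t • v) v) t := fun x t hxt => by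
    have h1 : HasDerivAt (fun s : ℂ => x + s • v) v t := by
      simpa using ((hasDerivAt_id t).smul_const v).const_add x
    exact ((hf.differentiableAt (hU.mem_nhds hxt)).hasFDerivAt).comp_hasDerivAt t h1
  have hunif : TendstoLocallyUniformlyOn (fun x (t : ℂ) => f (x + t • v))
      (fun t => f (x₀ + t • v)) (𝓝 x₀) (ball 0 δ) := by
    intro u hu t ht
    have hc : ContinuousAt (fun q : E × ℂ => f (q.1 + q.2 • v)) (x₀, t) :=
      ContinuousAt.comp (g := f) (f := fun q : E × ℂ => q.1 + q.2 • v)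
        (hf.continuousOn.continuousAt (hU.mem_nhds (hVB' _ (mem_of_mem_nhds hV) _ ht)))
        hmap.continuousAt
    have hc2 : ContinuousAt (fun s : ℂ => f (x₀ + s • v)) t :=
      (hline x₀ t (hVB' _ (mem_of_mem_nhds hV) _ ht)).continuousAt
    have h1 : Tendsto (fun q : E × ℂ => (f (x₀ + q.2 • v), f (q.1 + q.2 • v))) (𝓝 (x₀, t))
        (𝓝 (f (x₀ + t • v), f (x₀ + t • v))) :=
      Tendsto.prodMk_nhds (hc2.tendsto.comp (continuous_snd.tendsto (x₀, t))) hc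
    have h2 := h1 (nhds_le_uniformity _ hu)
    rw [mem_map, nhds_prod_eq, mem_prod_iff] at h2
    obtain ⟨V', hV', B', hB', hVB'⟩ := h2
    exact ⟨B', mem_nhdsWithin_of_mem_nhds hB',
      Eventually.mono hV' fun x hx s hs => hVB' (Set.mk_mem_prod hx hs)⟩
  have h := hunif.deriv (Eventually.mono hV fun x hx t ht =>
    (hline x t (hVB' x hx t ht)).differentiableAt.differentiableWithinAt) isOpen_ball
  have h0 := h.tendsto_at (mem_ball_self hδ)
  have hx₀' := (hline x₀ 0 (by simpa using hx₀)).deriv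
  have : Tendsto (fun x => fderiv ℂ f x v) (𝓝 x₀) (𝓝 (fderiv ℂ f x₀ v)) := by
    simp only [zero_smul, add_zero] at hx₀'
    rw [← hx₀']
    refine h0.congr' ?_
    filter_upwards [hU.mem_nhds hx₀] with x hx
    simpa using (hline x 0 (by simpa using hx)).deriv
  exact this

theorem integrable_mul_of_compact_support {ι : Type*} [Fintype ι] {f g : (ι → ℂ) → ℂ}
    {U K : Set (ι → ℂ)} (hU : IsOpen U) (hf : ContinuousOn f U) (hg : Continuous g)
    (hK : IsCompact K) (hKU : K ⊆ U) (hgK : ∀ w ∉ K, g w = 0) :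
    Integrable (fun w => f w * g w) := by
  have hsupp : tsupport (fun w => f w * g w) ⊆ K :=
    closure_minimal (fun w hw => by_contra fun h => hw (by simp [hgK w h])) hK.isClosed
  refine Continuous.integrable_of_hasCompactSupport (continuous_of_tsupport fun w hw => ?_)
    (hK.of_isClosed_subset (isClosed_tsupport _) hsupp)
  exact (hf.continuousAt (hU.mem_nhds (hKU (hsupp hw)))).mul hg.continuousAt

theorem integral_mul_dbar_eq_zero {f v : (ι → ℂ) → ℂ} {U K : Set (ι → ℂ)} (hU : IsOpen U)
    (hf : DifferentiableOn ℂ f U) (hv : ContDiff ℝ 1 v) (hK : IsCompact K) (hKU : K ⊆ U)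
    (hvK : ∀ w ∉ K, v w = 0) (j : ι) : ∫ w, f w * dbar j v w = 0 := by
  have hsupp : tsupport v ⊆ K :=
    closure_minimal (fun w hw => by_contra fun h => hw (hvK w h)) hK.isClosed
  have hfd : ∀ w ∈ U, DifferentiableAt ℂ f w := fun w hw => hf.differentiableAt (hU.mem_nhds hw)
  have hdv (e : ι → ℂ) : ∀ w ∉ K, fderiv ℝ v w e = 0 := fun w hw => by
    rw [fderiv_of_notMem_tsupport ℝ (fun h => hw (hsupp h))]; rfl
  have hf' (e : ι → ℂ) : ContinuousOn (fun w => fderiv ℝ f w e) U :=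
    (continuousOn_fderiv_apply_of_differentiableOn hU hf e).congr fun w hw => by
      simp [(hfd w hw).fderiv_restrictScalars ℝ]
  have hi1 (e : ι → ℂ) : Integrable (fun w => f w * fderiv ℝ v w e) :=
    integrable_mul_of_compact_support hU hf.continuousOn
      ((hv.continuous_fderiv one_ne_zero).clm_apply continuous_const) hK hKU (hdv e)
  have hi2 (e : ι → ℂ) : Integrable (fun w => fderiv ℝ f w e * v w) :=
    integrable_mul_of_compact_support hU (hf' e) hv.continuous hK hKU hvK
  have hparts (e : ι → ℂ) : ∫ w, f w * fderiv ℝ v w e = - ∫ w, fderiv ℝ f w e * v w :=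
    integral_mul_fderiv_eq_neg_fderiv_mul_of_integrable (hi2 e) (hi1 e)
      (integrable_mul_of_compact_support hU hf.continuousOn hv.continuous hK hKU hvK)
      (fun w hw => (hfd w (hKU (hsupp hw))).restrictScalars ℝ)
      (fun w _ => hv.differentiable one_ne_zero w)
  have hzero : ∀ w, fderiv ℝ f w (Pi.single j 1) * v w +
      Complex.I * (fderiv ℝ f w (Pi.single j Complex.I) * v w) = 0 := fun w => by
    by_cases hw : w ∈ K
    · have := dbar_eq_zero_of_differentiableAt (hfd w (hKU hw)) j
      rw [dbar, smul_eq_mul] at this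
      rw [← mul_assoc, ← add_mul, this, zero_mul]
    · simp [hvK w hw]
  calc ∫ w, f w * dbar j v w
      = ∫ w, (f w * fderiv ℝ v w (Pi.single j 1) +
          Complex.I * (f w * fderiv ℝ v w (Pi.single j Complex.I))) := by
        congr 1 with w
        rw [dbar, smul_eq_mul]; ring
    _ = -∫ w, (fderiv ℝ f w (Pi.single j 1) * v w +
          Complex.I * (fderiv ℝ f w (Pi.single j Complex.I) * v w)) := by
        rw [integral_add (hi1 _) ((hi1 _).const_mul _), integral_add (hi2 _) ((hi2 _).const_mul _),
          integral_const_mul, integral_const_mul, hparts, hparts]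
        ring
    _ = 0 := by simp [hzero]

theorem hasFDerivAt_det {E : Type*} [NormedAddCommGroup E] [NormedSpace ℝ E]
    {r : ι → E → ι → ℂ} {r' : ι → E →L[ℝ] ι → ℂ} {x : E}
    (hr : ∀ i, HasFDerivAt (r i) (r' i) x) :
    ∃ D : E →L[ℝ] ℂ, HasFDerivAt (fun y => (Matrix.of fun i => r i y).det) D x ∧
      ∀ v, D v = ∑ i, ((Matrix.of fun i => r i x).updateRow i (r' i v)).det := by
  let d : ContinuousMultilinearMap ℝ (fun _ : ι => ι → ℂ) ℂ :=
    { toMultilinearMap :=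
        (Matrix.detRowAlternating (R := ℂ) (n := ι)).toMultilinearMap.restrictScalars ℝ
      cont := Continuous.matrix_det (A := fun m : ι → ι → ℂ => Matrix.of m) continuous_id }
  refine ⟨_, HasFDerivAt.multilinear_comp d hr, fun v => ?_⟩
  simp
  rfl

/-- The matrix of Wirtinger derivatives of a vector field, the `j`-th row being its derivative
in the direction `w̄ⱼ`. -/
def dbarMatrix (G : (ι → ℂ) → ι → F) (w : ι → ℂ) : Matrix ι ι F :=
  Matrix.of fun j => dbar j G w

theorem dbar_det {r : ι → (ι → ℂ) → ι → ℂ} {w : ι → ℂ}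
    (hr : ∀ i, DifferentiableAt ℝ (r i) w) (j : ι) :
    dbar j (fun y => (Matrix.of fun i => r i y).det) w =
      ∑ i, ((Matrix.of fun i => r i w).updateRow i (dbar j (r i) w)).det := by
  obtain ⟨D, hD, hDv⟩ := hasFDerivAt_det fun i => (hr i).hasFDerivAt
  rw [dbar, hD.fderiv, hDv, hDv, Finset.smul_sum, ← Finset.sum_add_distrib]
  refine Finset.sum_congr rfl fun i _ => ?_
  rw [smul_eq_mul, ← Matrix.det_updateRow_smul, ← Matrix.det_updateRow_add]
  rfl

/-- The divergence of the vector field of Cramer determinants of `H` with respect to the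
`∂̄`-matrix of `G`. -/
theorem sum_dbar_det_updateRow {G H : (ι → ℂ) → ι → ℂ} (hG : ContDiff ℝ 2 G)
    (hH : ContDiff ℝ 2 H) (w : ι → ℂ) :
    ∑ j, dbar j (fun x => ((dbarMatrix G x).updateRow j (H x)).det) w =
      ∑ j, ((dbarMatrix G w).updateRow j (dbar j H w)).det := by
  have hGd (k : ι) : DifferentiableAt ℝ (dbar k G) w :=
    (contDiff_dbar hG k).differentiable one_ne_zero w
  have hHd : DifferentiableAt ℝ H w := hH.differentiable two_ne_zero w
  let T (j k : ι) : ℂ := if k = j then 0 else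
    (((dbarMatrix G w).updateRow j (H w)).updateRow k (dbar j (dbar k G) w)).det
  have hstep (j : ι) : dbar j (fun x => ((dbarMatrix G x).updateRow j (H x)).det) w =
      ((dbarMatrix G w).updateRow j (dbar j H w)).det + ∑ k, T j k := by
    have hrow : (fun x => ((dbarMatrix G x).updateRow j (H x)).det) =
        fun x => (Matrix.of fun k => (if k = j then H else dbar k G) x).det := by
      ext x
      congr 1
      ext k l
      by_cases hk : k = j
      · subst hk; simp
      · simp [hk, dbarMatrix]
    have hM : (Matrix.of fun k => (if k = j then H else dbar k G) w) =
        (dbarMatrix G w).updateRow j (H w) := by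
      ext k l
      by_cases hk : k = j
      · subst hk; simp
      · simp [hk, dbarMatrix]
    rw [hrow, dbar_det (fun k => by split_ifs <;> [exact hHd; exact hGd k]), hM,
      ← Finset.add_sum_erase _ _ (Finset.mem_univ j),
      ← Finset.add_sum_erase _ (T j) (Finset.mem_univ j)]
    simp only [if_true, Matrix.updateRow_idem, T, zero_add]
    congr 1
    refine Finset.sum_congr rfl fun k hk => ?_
    simp [Finset.ne_of_mem_erase hk]
  have hanti (j k : ι) : T j k = -T k j := by
    by_cases hkj : k = j
    · simp [T, hkj]
    · simp only [T, hkj, Ne.symm hkj, if_false]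
      rw [dbar_dbar_comm hG w j k, ← neg_one_mul,
        show (-1 : ℂ) = ((Equiv.Perm.sign (Equiv.swap j k) : ℤ) : ℂ) by
          simp [Equiv.Perm.sign_swap (Ne.symm hkj)], ← Matrix.det_permute]
      congr 1
      ext a b
      rcases eq_or_ne a j with rfl | haj
      · simp [Matrix.updateRow_apply, hkj, Ne.symm hkj]
      rcases eq_or_ne a k with rfl | hak
      · simp [Matrix.updateRow_apply]
      · simp [Matrix.updateRow_apply, Equiv.swap_apply_of_ne_of_ne haj hak, haj, hak]
  have hzero : ∑ j, ∑ k, T j k = 0 := by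
    have h : ∑ j, ∑ k, T j k = -∑ j, ∑ k, T j k := by
      conv_lhs => rw [Finset.sum_comm]
      simp_rw [← Finset.sum_neg_distrib]
      exact Finset.sum_congr rfl fun j _ => Finset.sum_congr rfl fun k _ => hanti k j
    exact self_eq_neg.1 h
  simp only [hstep, Finset.sum_add_distrib, hzero, add_zero]

theorem dbarMatrix_mulVec_eq_zero {G : (ι → ℂ) → ι → ℂ} (hG : ContDiff ℝ 2 G)
    {z w : ι → ℂ} (hw : ∀ᶠ x in 𝓝 w, ∑ i, (x i - z i) * G x i = 1) :
    (dbarMatrix G w).mulVec (w - z) = 0 := by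
  ext j
  have hGw : DifferentiableAt ℝ G w := hG.differentiable two_ne_zero w
  have hGi (i : ι) : DifferentiableAt ℝ (fun x => G x i) w := differentiableAt_pi.1 hGw i
  have hcoord (i : ι) : DifferentiableAt ℂ (fun x : ι → ℂ => x i - z i) w := by fun_prop
  have h0 : dbar j (fun x => ∑ i, (x i - z i) * G x i) w = 0 := by
    have h1 := (show (fun x => ∑ i, (x i - z i) * G x i) =ᶠ[𝓝 w] fun _ => (1 : ℂ) from hw)
    simp [dbar, h1.fderiv_eq]
  rw [dbar_sum (fun i _ => ((hcoord i).restrictScalars ℝ).fun_mul (hGi i))] at h0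
  simp only [dbar_mul ((hcoord _).restrictScalars ℝ) (hGi _),
    dbar_eq_zero_of_differentiableAt (hcoord _), zero_mul, add_zero] at h0
  simpa [Matrix.mulVec, dotProduct, dbarMatrix, dbar_pi_apply hGw, mul_comm] using h0

theorem continuous_dbarMatrix {G : (ι → ℂ) → ι → F} (hG : ContDiff ℝ 2 G) :
    Continuous (dbarMatrix G) :=
  continuous_pi fun j => continuous_dbar (hG.of_le one_le_two) j

theorem contDiff_det {E : Type*} [NormedAddCommGroup E] [NormedSpace ℝ E] {n : WithTop ℕ∞}
    {M : E → Matrix ι ι ℂ} (hM : ∀ i j, ContDiff ℝ n fun x => M x i j) :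
    ContDiff ℝ n fun x => (M x).det := by
  simp only [Matrix.det_apply]
  exact ContDiff.sum fun σ _ => (contDiff_prod fun i _ => hM _ _).const_smul (Equiv.Perm.sign σ)

theorem integral_mul_eq_of_hasDerivAt {ι : Type*} [Fintype ι] {f : (ι → ℂ) → ℂ}
    {U K : Set (ι → ℂ)} (hU : IsOpen U) (hf : ContinuousOn f U) (hK : IsCompact K) (hKU : K ⊆ U)
    {d Q : (ι → ℂ) → ℝ → ℂ} (hQc : Continuous (Function.uncurry Q))
    (hQK : ∀ t, ∀ w ∉ K, Q w t = 0) (hderiv : ∀ w t, HasDerivAt (d w) (Q w t) t)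
    (hQint : ∀ t, ∫ w, f w * Q w t = 0) (hd₀ : Integrable fun w => f w * d w 0)
    (hd₁ : Integrable fun w => f w * d w 1) :
    ∫ w, f w * d w 0 = ∫ w, f w * d w 1 := by
  have hFTC (w : ι → ℂ) : f w * d w 1 - f w * d w 0 =
      ∫ t : unitInterval, f w * Q w t := by
    have h1 := intervalIntegral.integral_eq_sub_of_hasDerivAt (a := 0) (b := 1)
      (fun t _ => hderiv w t)
      ((hQc.comp (Continuous.prodMk_right w)).intervalIntegrable 0 1)
    rw [intervalIntegral.integral_of_le zero_le_one,
      ← integral_Icc_eq_integral_Ioc] at h1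
    rw [← mul_sub, ← h1, integral_const_mul]
    congr 1
    exact (integral_subtype_comap measurableSet_Icc (fun t => Q w t)).symm
  have hsub : tsupport (Function.uncurry fun (w : ι → ℂ) (t : unitInterval) =>
      f w * Q w t) ⊆ K ×ˢ Set.univ :=
    closure_minimal (fun q hq => ⟨by_contra fun h => hq (by
      simp [Function.uncurry, hQK _ _ h]), trivial⟩) (hK.isClosed.prod isClosed_univ)
  have hcont : Continuous (Function.uncurry fun (w : ι → ℂ) (t : unitInterval) =>
      f w * Q w t) := by
    refine continuous_of_tsupport fun q hq => ?_
    have hq' : q.1 ∈ K := (Set.mem_prod.1 (hsub hq)).1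
    have hfq : ContinuousAt (fun p : (ι → ℂ) × unitInterval => f p.1) q :=
      ContinuousAt.comp (g := f) (hf.continuousAt (hU.mem_nhds (hKU hq')))
        continuousAt_fst
    have hQ' : Continuous fun p : (ι → ℂ) × unitInterval => Q p.1 p.2 :=
      hQc.comp (by fun_prop : Continuous fun p : (ι → ℂ) × unitInterval => (p.1, (p.2 : ℝ)))
    exact hfq.mul hQ'.continuousAt
  have hsupp : HasCompactSupport (Function.uncurry fun (w : ι → ℂ) (t : unitInterval) =>
      f w * Q w t) :=
    (hK.prod isCompact_univ).of_isClosed_subset (isClosed_tsupport _) hsub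
  have hswap := integral_integral_swap_of_hasCompactSupport hcont hsupp
    (μ := volume) (ν := volume)
  refine (sub_eq_zero.1 ?_).symm
  rw [← integral_sub hd₁ hd₀]
  simp only [hFTC]
  rw [hswap]
  simp [hQint]

/-- The Cauchy–Fantappiè integral does not depend on the choice of the Leray section. -/
theorem integral_mul_det_dbarMatrix_eq {f : (ι → ℂ) → ℂ} {U K : Set (ι → ℂ)} (hU : IsOpen U)
    (hf : DifferentiableOn ℂ f U) (hK : IsCompact K) (hKU : K ⊆ U) {z : ι → ℂ}
    {G₀ G₁ : (ι → ℂ) → ι → ℂ} (hG₀ : ContDiff ℝ 2 G₀) (hG₁ : ContDiff ℝ 2 G₁)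
    (h₀ : ∀ w ∉ K, ∑ i, (w i - z i) * G₀ w i = 1)
    (h₁ : ∀ w ∉ K, ∑ i, (w i - z i) * G₁ w i = 1) :
    ∫ w, f w * (dbarMatrix G₀ w).det = ∫ w, f w * (dbarMatrix G₁ w).det := by
  have hdet {M : Matrix ι ι ℂ} {w : ι → ℂ} (hw : w ∉ K) (h : M.mulVec (w - z) = 0) :
      M.det = 0 := by
    refine Matrix.exists_mulVec_eq_zero_iff.1 ⟨w - z, fun hwz => ?_, h⟩
    have := h₀ w hw
    simp [← Pi.sub_apply, hwz] at this
  let H : (ι → ℂ) → ι → ℂ := fun w => G₁ w - G₀ w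
  have hH : ContDiff ℝ 2 H := hG₁.sub hG₀
  let P (t : ℝ) : (ι → ℂ) → ι → ℂ := fun w => G₀ w + t • H w
  have hP (t : ℝ) : ContDiff ℝ 2 (P t) := hG₀.add (hH.const_smul t)
  have hPK (t : ℝ) : ∀ w ∉ K, ∑ i, (w i - z i) * P t w i = 1 := fun w hw => by
    have : ∑ i, (w i - z i) * P t w i = ∑ i, (w i - z i) * G₀ w i +
        t * (∑ i, (w i - z i) * G₁ w i - ∑ i, (w i - z i) * G₀ w i) := by
      rw [← Finset.sum_sub_distrib, Finset.mul_sum, ← Finset.sum_add_distrib]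
      refine Finset.sum_congr rfl fun i _ => ?_
      simp only [P, H, Pi.add_apply, Pi.smul_apply, Pi.sub_apply, Complex.real_smul]
      ring
    rw [this, h₀ w hw, h₁ w hw]; simp
  have hPM (t : ℝ) (w : ι → ℂ) : dbarMatrix (P t) w =
      Matrix.of fun j => dbar j G₀ w + t • dbar j H w := by
    ext j i
    have e1 : dbar j (P t) w = dbar j G₀ w + t • dbar j H w := by
      rw [← dbar_real_smul (hH.differentiable two_ne_zero w)]
      exact dbar_add (hG₀.differentiable two_ne_zero w)
        ((hH.differentiable two_ne_zero w).const_smul t) j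
    simp [dbarMatrix, e1]
  let Q (w : ι → ℂ) (t : ℝ) : ℂ := ∑ j, ((dbarMatrix (P t) w).updateRow j (dbar j H w)).det
  have hderiv (w : ι → ℂ) (t : ℝ) :
      HasDerivAt (fun s => (dbarMatrix (P s) w).det) (Q w t) t := by
    simp only [hPM, Q]
    have hr (j : ι) : HasFDerivAt (fun s : ℝ => dbar j G₀ w + s • dbar j H w)
        (ContinuousLinearMap.toSpanSingleton ℝ (dbar j H w)) t := by
      have := (((hasDerivAt_id t).smul_const (dbar j H w)).const_add (dbar j G₀ w))
      simpa using this.hasFDerivAt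
    obtain ⟨D, hD, hDv⟩ := hasFDerivAt_det hr
    have := hD.hasDerivAt
    rw [hDv] at this
    simpa using this
  have hQc : Continuous (Function.uncurry Q) := by
    refine continuous_finsetSum _ fun j _ => Continuous.matrix_det ?_
    refine Continuous.matrix_updateRow j ?_ ((continuous_dbar (hH.of_le one_le_two) j).comp
      continuous_fst)
    simp only [hPM]
    refine continuous_pi fun k => ?_
    exact ((continuous_dbar (hG₀.of_le one_le_two) k).comp continuous_fst).add
      (continuous_snd.smul ((continuous_dbar (hH.of_le one_le_two) k).comp continuous_fst))
  have hHK (w : ι → ℂ) (hw : w ∉ K) : H w ⬝ᵥ (w - z) = 0 := by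
    have : H w ⬝ᵥ (w - z) =
        ∑ i, (w i - z i) * G₁ w i - ∑ i, (w i - z i) * G₀ w i := by
      rw [← Finset.sum_sub_distrib]
      refine Finset.sum_congr rfl fun i _ => ?_
      simp only [H, Pi.sub_apply]; ring
    rw [this, h₀ w hw, h₁ w hw, sub_self]
  have hker (t : ℝ) (w : ι → ℂ) (hw : w ∉ K) : (dbarMatrix (P t) w).mulVec (w - z) = 0 :=
    dbarMatrix_mulVec_eq_zero (hP t)
      (Filter.Eventually.mono (hK.isClosed.isOpen_compl.mem_nhds hw) fun x hx => hPK t x hx)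
  have hvK (t : ℝ) (j : ι) (w : ι → ℂ) (hw : w ∉ K) :
      ((dbarMatrix (P t) w).updateRow j (H w)).det = 0 := by
    refine hdet hw ?_
    ext k
    rcases eq_or_ne k j with rfl | hk
    · simpa [Matrix.mulVec] using hHK w hw
    · simpa [Matrix.mulVec, Matrix.updateRow_ne hk] using congrFun (hker t w hw) k
  have hvC (t : ℝ) (j : ι) :
      ContDiff ℝ 1 fun w => ((dbarMatrix (P t) w).updateRow j (H w)).det := by
    refine contDiff_det fun k l => ?_
    rcases eq_or_ne k j with rfl | hk
    · simpa using contDiff_pi.1 (hH.of_le one_le_two) l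
    · simpa [Matrix.updateRow_ne hk, dbarMatrix] using contDiff_pi.1 (contDiff_dbar (hP t) k) l
  have hQdiv (w : ι → ℂ) (t : ℝ) :
      Q w t = ∑ j, dbar j (fun x => ((dbarMatrix (P t) x).updateRow j (H x)).det) w :=
    (sum_dbar_det_updateRow (hP t) hH w).symm
  have hdbarK (t : ℝ) (j : ι) (w : ι → ℂ) (hw : w ∉ K) :
      dbar j (fun x => ((dbarMatrix (P t) x).updateRow j (H x)).det) w = 0 := by
    have h1 : (fun x => ((dbarMatrix (P t) x).updateRow j (H x)).det) =ᶠ[𝓝 w] fun _ => 0 :=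
      Filter.Eventually.mono (hK.isClosed.isOpen_compl.mem_nhds hw) fun x hx => hvK t j x hx
    simp [dbar, h1.fderiv_eq]
  have hQK (t : ℝ) (w : ι → ℂ) (hw : w ∉ K) : Q w t = 0 := by
    rw [hQdiv]
    exact Finset.sum_eq_zero fun j _ => hdbarK t j w hw
  have hQint (t : ℝ) : ∫ w, f w * Q w t = 0 := by
    simp only [hQdiv, Finset.mul_sum]
    rw [integral_finsetSum _ fun j _ => integrable_mul_of_compact_support hU hf.continuousOn
      (continuous_dbar (hvC t j) j) hK hKU (hdbarK t j)]
    exact Finset.sum_eq_zero fun j _ =>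
      integral_mul_dbar_eq_zero hU hf (hvC t j) hK hKU (hvK t j) j
  have hdetK {G : (ι → ℂ) → ι → ℂ} (hG : ContDiff ℝ 2 G)
      (h : ∀ w ∉ K, ∑ i, (w i - z i) * G w i = 1) (w : ι → ℂ) (hw : w ∉ K) :
      (dbarMatrix G w).det = 0 :=
    hdet hw (dbarMatrix_mulVec_eq_zero hG
      (Filter.Eventually.mono (hK.isClosed.isOpen_compl.mem_nhds hw) h))
  have hint {G : (ι → ℂ) → ι → ℂ} (hG : ContDiff ℝ 2 G)
      (h : ∀ w ∉ K, ∑ i, (w i - z i) * G w i = 1) :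
      Integrable fun w => f w * (dbarMatrix G w).det :=
    integrable_mul_of_compact_support hU hf.continuousOn (continuous_dbarMatrix hG).matrix_det
      hK hKU (hdetK hG h)
  have hP1 : P 1 = G₁ := by ext w i; simp [P, H]
  have hP0 : P 0 = G₀ := by ext w i; simp [P]
  have := integral_mul_eq_of_hasDerivAt hU hf.continuousOn hK hKU hQc hQK hderiv hQint
    (hint (hP 0) (hPK 0)) (hint (hP 1) (hPK 1))
  rwa [hP0, hP1] at this

theorem det_dbarMatrix_eq_zero {G : (ι → ℂ) → ι → ℂ} (hG : ContDiff ℝ 2 G) {z w : ι → ℂ}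
    (hw : ∀ᶠ x in 𝓝 w, ∑ i, (x i - z i) * G x i = 1) : (dbarMatrix G w).det = 0 := by
  refine Matrix.exists_mulVec_eq_zero_iff.1 ⟨w - z, fun hwz => ?_, dbarMatrix_mulVec_eq_zero hG hw⟩
  have := hw.self_of_nhds
  simp [← Pi.sub_apply, hwz] at this

end CauchyRiemann

section BochnerMartinelli

/-- A smooth function equal to `1 / s` for `δ ≤ s` and vanishing near `0`. -/
def radialProfile (δ s : ℝ) : ℝ := Real.smoothTransition (2 * s / δ - 1) / s

theorem radialProfile_eq_zero {δ s : ℝ} (hδ : 0 < δ) (hs : s ≤ δ / 2) :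
    radialProfile δ s = 0 := by
  rw [radialProfile, Real.smoothTransition.zero_of_nonpos, zero_div]
  rw [sub_nonpos, div_le_one hδ]; linarith

theorem radialProfile_pos {δ s : ℝ} (hδ : 0 < δ) (hs : δ / 2 < s) : 0 < radialProfile δ s := by
  refine div_pos (Real.smoothTransition.pos_of_pos ?_) (by linarith)
  rw [sub_pos, one_lt_div hδ]; linarith

theorem radialProfile_nonneg {δ : ℝ} (hδ : 0 < δ) (s : ℝ) : 0 ≤ radialProfile δ s := by
  rcases le_or_gt s (δ / 2) with hs | hs
  · exact (radialProfile_eq_zero hδ hs).ge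
  · exact (radialProfile_pos hδ hs).le

theorem mul_radialProfile {δ : ℝ} (hδ : 0 < δ) (s : ℝ) :
    s * radialProfile δ s = Real.smoothTransition (2 * s / δ - 1) := by
  rcases eq_or_ne s 0 with rfl | hs
  · rw [Real.smoothTransition.zero_of_nonpos (by simp)]; simp
  · rw [radialProfile]; field_simp

theorem contDiff_smoothTransition_affine (δ : ℝ) :
    ContDiff ℝ 2 fun s : ℝ => Real.smoothTransition (2 * s / δ - 1) :=
  (Real.smoothTransition.contDiff (n := 2)).comp (by fun_prop)

theorem contDiff_radialProfile {δ : ℝ} (hδ : 0 < δ) : ContDiff ℝ 2 (radialProfile δ) := by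
  refine contDiff_iff_contDiffAt.2 fun s => ?_
  rcases lt_or_ge s (δ / 2) with hs | hs
  · refine (contDiffAt_const (c := (0 : ℝ))).congr_of_eventuallyEq ?_
    filter_upwards [Iio_mem_nhds hs] with x hx using radialProfile_eq_zero hδ (le_of_lt hx)
  · exact (contDiff_smoothTransition_affine δ).contDiffAt.div contDiffAt_id
      (show (0 : ℝ) < s by linarith).ne'

theorem radialProfile_add_mul_deriv {δ : ℝ} (hδ : 0 < δ) (s : ℝ) :
    radialProfile δ s + s * deriv (radialProfile δ) s =
      deriv (fun s => Real.smoothTransition (2 * s / δ - 1)) s := by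
  have h := (hasDerivAt_id s).mul ((contDiff_radialProfile hδ).differentiable two_ne_zero
    s).hasDerivAt
  have h' : (fun s => Real.smoothTransition (2 * s / δ - 1)) = id * radialProfile δ := by
    ext x; exact (mul_radialProfile hδ x).symm
  rw [h', h.deriv]
  simp

variable {ι : Type*} [Fintype ι]

/-- The Bochner–Martinelli section with pole at `z`, smoothed at the pole. -/
def bmSection (δ : ℝ) (z w : ι → ℂ) (i : ι) : ℂ :=
  (radialProfile δ (∑ k, ‖w k - z k‖ ^ 2) : ℂ) * (starRingEnd ℂ) (w i - z i)

/-- The radial density of the determinant of the smoothed Bochner–Martinelli section. -/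
def bmDensity (ι : Type*) [Fintype ι] (δ s : ℝ) : ℝ :=
  (2 * radialProfile δ s) ^ Fintype.card ι *
    (1 + deriv (radialProfile δ) s / radialProfile δ s * s)

theorem contDiff_sum_norm_sq (z : ι → ℂ) :
    ContDiff ℝ 2 fun w : ι → ℂ => ∑ k, ‖w k - z k‖ ^ 2 :=
  ContDiff.sum fun k _ => ((contDiff_apply ℝ ℂ k).sub contDiff_const).norm_sq ℝ

theorem contDiff_bmSection {δ : ℝ} (hδ : 0 < δ) (z : ι → ℂ) :
    ContDiff ℝ 2 (bmSection δ z) := by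
  refine contDiff_pi.2 fun i => ?_
  refine ContDiff.mul ?_ ?_
  · exact Complex.ofRealCLM.contDiff.comp
      ((contDiff_radialProfile hδ).comp (contDiff_sum_norm_sq z))
  · exact Complex.conjCLE.contDiff.comp ((contDiff_apply ℝ ℂ i).sub contDiff_const)

theorem sum_mul_bmSection {δ : ℝ} (hδ : 0 < δ) {z w : ι → ℂ}
    (hw : δ ≤ ∑ k, ‖w k - z k‖ ^ 2) : ∑ i, (w i - z i) * bmSection δ z w i = 1 := by
  have h1 : ∑ i, (w i - z i) * bmSection δ z w i =
      (((∑ k, ‖w k - z k‖ ^ 2) * radialProfile δ (∑ k, ‖w k - z k‖ ^ 2) : ℝ) : ℂ) := by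
    rw [Complex.ofReal_mul, Complex.ofReal_sum, Finset.sum_mul]
    refine Finset.sum_congr rfl fun i _ => ?_
    rw [bmSection, mul_left_comm, Complex.mul_conj']
    push_cast
    ring
  rw [h1, mul_radialProfile hδ, Real.smoothTransition.one_of_one_le, Complex.ofReal_one]
  rw [le_sub_iff_add_le, le_div_iff₀ hδ]; linarith

theorem bmDensity_eq {δ s : ℝ} (hδ : 0 < δ) (hs : δ / 2 < s) :
    bmDensity ι δ s = (2 * radialProfile δ s) ^ Fintype.card ι *
      (deriv (fun s => Real.smoothTransition (2 * s / δ - 1)) s / radialProfile δ s) := by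
  have := (radialProfile_pos hδ hs).ne'
  rw [bmDensity, ← radialProfile_add_mul_deriv hδ]
  field_simp

theorem bmDensity_nonneg [Nonempty ι] {δ : ℝ} (hδ : 0 < δ) (s : ℝ) : 0 ≤ bmDensity ι δ s := by
  rcases le_or_gt s (δ / 2) with hs | hs
  · simp [bmDensity, radialProfile_eq_zero hδ hs]
  · rw [bmDensity_eq hδ hs]
    have hmono : Monotone fun s : ℝ => Real.smoothTransition (2 * s / δ - 1) := fun a b hab =>
      Real.smoothTransition.monotone (by gcongr)
    exact mul_nonneg (pow_nonneg (mul_nonneg zero_le_two (radialProfile_nonneg hδ s)) _)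
      (div_nonneg hmono.deriv_nonneg (radialProfile_nonneg hδ s))

theorem exists_bmDensity_pos : ∃ s : ℝ, 0 ≤ s ∧ 0 < bmDensity ι 1 s := by
  obtain ⟨s, hs, hds⟩ := exists_deriv_eq_slope
    (fun s : ℝ => Real.smoothTransition (2 * s / 1 - 1)) (a := 3 / 4) (b := 1) (by norm_num)
    (contDiff_smoothTransition_affine 1).continuous.continuousOn
    ((contDiff_smoothTransition_affine 1).differentiable two_ne_zero).differentiableOn
  have hs' : (1 : ℝ) / 2 < s := by linarith [hs.1]
  refine ⟨s, by linarith, ?_⟩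
  rw [bmDensity_eq one_pos hs', hds]
  have hp := radialProfile_pos one_pos hs'
  have h1 : Real.smoothTransition (2 * (3 / 4) / 1 - 1) < 1 :=
    Real.smoothTransition.lt_one_of_lt_one (by norm_num)
  have h2 : Real.smoothTransition (2 * 1 / 1 - 1) = 1 :=
    Real.smoothTransition.one_of_one_le (by norm_num)
  rw [h2]
  have h3 : 0 < 1 - Real.smoothTransition (2 * (3 / 4) / 1 - 1) := by linarith
  have h4 : (0 : ℝ) < 1 - 3 / 4 := by norm_num
  positivity

variable [DecidableEq ι]

theorem dbar_conj_coord (z w : ι → ℂ) (i j : ι) :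
    dbar j (fun x : ι → ℂ => (starRingEnd ℂ) (x i - z i)) w = if i = j then 2 else 0 := by
  have h : HasFDerivAt (fun x : ι → ℂ => (starRingEnd ℂ) (x i - z i))
      ((Complex.conjCLE : ℂ →L[ℝ] ℂ).comp (ContinuousLinearMap.proj i)) w :=
    (Complex.conjCLE : ℂ →L[ℝ] ℂ).hasFDerivAt.comp w ((hasFDerivAt_apply i w).sub_const (z i))
  rw [dbar, h.fderiv]
  by_cases hij : i = j
  · subst hij; simp; norm_num
  · simp [hij]

theorem dbar_sum_norm_sq (z w : ι → ℂ) (j : ι) :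
    dbar j (fun x : ι → ℂ => ((∑ k, ‖x k - z k‖ ^ 2 : ℝ) : ℂ)) w = 2 * (w j - z j) := by
  have h : (fun x : ι → ℂ => ((∑ k, ‖x k - z k‖ ^ 2 : ℝ) : ℂ)) =
      fun x => ∑ k, (x k - z k) * (starRingEnd ℂ) (x k - z k) := by
    ext x
    simp only [Complex.mul_conj', Complex.ofReal_sum, Complex.ofReal_pow]
  have hd (k : ι) : DifferentiableAt ℂ (fun x : ι → ℂ => x k - z k) w := by fun_prop
  have hc (k : ι) : DifferentiableAt ℝ (fun x : ι → ℂ => (starRingEnd ℂ) (x k - z k)) w :=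
    (Complex.conjCLE : ℂ →L[ℝ] ℂ).differentiableAt.comp w ((hd k).restrictScalars ℝ)
  rw [h, dbar_sum fun k _ => ((hd k).restrictScalars ℝ).fun_mul (hc k)]
  simp only [dbar_mul ((hd _).restrictScalars ℝ) (hc _), dbar_conj_coord,
    dbar_eq_zero_of_differentiableAt (hd _)]
  simp [mul_comm]

theorem dbar_ofReal_comp {φ : ℝ → ℝ} {S : (ι → ℂ) → ℝ} {w : ι → ℂ}
    (hφ : DifferentiableAt ℝ φ (S w)) (hS : DifferentiableAt ℝ S w) (j : ι) :
    dbar j (fun x => (φ (S x) : ℂ)) w =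
      ((deriv φ (S w) : ℝ) : ℂ) * dbar j (fun x => (S x : ℂ)) w := by
  have h1 : HasFDerivAt (fun x => (S x : ℂ)) (Complex.ofRealCLM.comp (fderiv ℝ S w)) w :=
    Complex.ofRealCLM.hasFDerivAt.comp w hS.hasFDerivAt
  have h2 : HasFDerivAt (fun x => (φ (S x) : ℂ))
      (Complex.ofRealCLM.comp (deriv φ (S w) • fderiv ℝ S w)) w :=
    Complex.ofRealCLM.hasFDerivAt.comp w (hφ.hasDerivAt.comp_hasFDerivAt w hS.hasFDerivAt)
  rw [dbar, dbar, h1.fderiv, h2.fderiv]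
  simp
  ring

theorem det_dbarMatrix_bmSection [Nonempty ι] {δ : ℝ} (hδ : 0 < δ) (z w : ι → ℂ) :
    (dbarMatrix (bmSection δ z) w).det = (bmDensity ι δ (∑ k, ‖w k - z k‖ ^ 2) : ℂ) := by
  set s := ∑ k, ‖w k - z k‖ ^ 2 with hs
  have hψ := (contDiff_radialProfile hδ).differentiable two_ne_zero s
  have hS := (contDiff_sum_norm_sq z).differentiable two_ne_zero w
  have hd (k : ι) : DifferentiableAt ℂ (fun x : ι → ℂ => x k - z k) w := by fun_prop
  have hc (k : ι) : DifferentiableAt ℝ (fun x : ι → ℂ => (starRingEnd ℂ) (x k - z k)) w :=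
    (Complex.conjCLE : ℂ →L[ℝ] ℂ).differentiableAt.comp w ((hd k).restrictScalars ℝ)
  have hentry (i j : ι) : dbarMatrix (bmSection δ z) w j i =
      2 * radialProfile δ s * (if i = j then 1 else 0) +
        2 * ((deriv (radialProfile δ) s : ℝ) : ℂ) *
          ((w j - z j) * (starRingEnd ℂ) (w i - z i)) := by
    have hmul := dbar_mul (Complex.ofRealCLM.differentiableAt.comp w (hψ.comp w hS)) (hc i) j
    have hcomp := dbar_ofReal_comp hψ hS j
    rw [dbar_sum_norm_sq] at hcomp
    simp only [Function.comp_def, Complex.ofRealCLM_apply, hcomp, dbar_conj_coord] at hmul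
    rw [dbarMatrix, Matrix.of_apply,
      dbar_pi_apply ((contDiff_bmSection hδ z).differentiable two_ne_zero w)]
    refine hmul.trans ?_
    rw [← hs]
    split_ifs <;> ring
  by_cases h0 : radialProfile δ s = 0
  · have hmin : IsLocalMin (radialProfile δ) s :=
      Filter.Eventually.of_forall fun x => h0 ▸ radialProfile_nonneg hδ x
    have hM : dbarMatrix (bmSection δ z) w = 0 := by
      ext j i
      rw [hentry, h0, hmin.deriv_eq_zero]
      simp
    rw [hM, Matrix.det_zero, bmDensity, h0]
    simp
  · have h0' : (radialProfile δ s : ℂ) ≠ 0 := by exact_mod_cast h0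
    have hM : dbarMatrix (bmSection δ z) w = (2 * radialProfile δ s : ℂ) •
        (1 + Matrix.replicateCol Unit (fun j => w j - z j) * Matrix.replicateRow Unit
          (fun i => ((deriv (radialProfile δ) s : ℝ) / radialProfile δ s : ℂ) *
            (starRingEnd ℂ) (w i - z i))) := by
      ext j i
      rw [hentry]
      simp only [Matrix.smul_apply, Matrix.add_apply, Matrix.mul_apply, Finset.univ_unique,
        Finset.sum_singleton, Matrix.replicateCol_apply, Matrix.replicateRow_apply,
        Matrix.one_apply, smul_eq_mul, eq_comm (a := i)]
      field_simp
    rw [hM, Matrix.det_smul, Matrix.det_one_add_replicateCol_mul_replicateRow, bmDensity]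
    have hdot : (fun i => ((deriv (radialProfile δ) s : ℝ) / radialProfile δ s : ℂ) *
        (starRingEnd ℂ) (w i - z i)) ⬝ᵥ (fun j => w j - z j) =
        ((deriv (radialProfile δ) s : ℝ) : ℂ) / radialProfile δ s * s := by
      rw [hs, dotProduct, Complex.ofReal_sum, Finset.mul_sum]
      refine Finset.sum_congr rfl fun i _ => ?_
      rw [mul_assoc, mul_comm ((starRingEnd ℂ) _), Complex.mul_conj']
      push_cast; rfl
    rw [hdot]
    push_cast
    rfl

end BochnerMartinelli

section CauchyFantappie

variable {ι : Type*} [Fintype ι]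

theorem mem_closedBall_sqrt_of_sum_norm_sq_le {z w : ι → ℂ} {r : ℝ}
    (h : ∑ k, ‖w k - z k‖ ^ 2 ≤ r) : w ∈ closedBall z √r := by
  rw [mem_closedBall, dist_pi_le_iff (Real.sqrt_nonneg r)]
  intro k
  rw [dist_eq_norm]
  exact Real.le_sqrt_of_sq_le ((Finset.single_le_sum (f := fun k => ‖w k - z k‖ ^ 2)
    (fun _ _ => by positivity) (Finset.mem_univ k)).trans h)

theorem isCompact_setOf_sum_norm_sq_le (z : ι → ℂ) (r : ℝ) :
    IsCompact {w : ι → ℂ | ∑ k, ‖w k - z k‖ ^ 2 ≤ r} :=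
  (isCompact_closedBall z √r).of_isClosed_subset
    (isClosed_le (contDiff_sum_norm_sq z).continuous continuous_const)
    fun _ h => mem_closedBall_sqrt_of_sum_norm_sq_le h

theorem bmDensity_eq_zero {δ s : ℝ} (hδ : 0 < δ) (hs : δ < s) : bmDensity ι δ s = 0 := by
  have h : (fun s => Real.smoothTransition (2 * s / δ - 1)) =ᶠ[𝓝 s] fun _ => 1 := by
    filter_upwards [Ioi_mem_nhds hs] with x hx
    apply Real.smoothTransition.one_of_one_le
    rw [le_sub_iff_add_le, le_div_iff₀ hδ]; linarith [mem_Ioi.1 hx]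
  rw [bmDensity_eq hδ (by linarith), h.deriv_eq]
  simp

variable (ι) in
/-- The normalising constant of the Bochner–Martinelli kernel. -/
def bmConst : ℝ := ∫ w : ι → ℂ, bmDensity ι 1 (∑ k, ‖w k‖ ^ 2)

variable [Nonempty ι]

theorem continuous_bmDensity {δ : ℝ} (hδ : 0 < δ) (z : ι → ℂ) :
    Continuous fun w : ι → ℂ => bmDensity ι δ (∑ k, ‖w k - z k‖ ^ 2) := by
  classical
  have h := Complex.continuous_re.comp (continuous_dbarMatrix (contDiff_bmSection hδ z)).matrix_det
  simpa only [Function.comp_def, det_dbarMatrix_bmSection hδ, Complex.ofReal_re] using h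

theorem integrable_bmDensity {δ : ℝ} (hδ : 0 < δ) (z : ι → ℂ) :
    Integrable fun w : ι → ℂ => bmDensity ι δ (∑ k, ‖w k - z k‖ ^ 2) :=
  (continuous_bmDensity hδ z).integrable_of_hasCompactSupport <|
    HasCompactSupport.intro (isCompact_setOf_sum_norm_sq_le z δ) fun _ hw =>
      bmDensity_eq_zero hδ (not_le.1 hw)

theorem bmConst_pos : 0 < bmConst ι := by
  classical
  have hc : Continuous fun w : ι → ℂ => bmDensity ι 1 (∑ k, ‖w k‖ ^ 2) := by
    simpa using continuous_bmDensity one_pos (0 : ι → ℂ)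
  obtain ⟨s, hs, hpos⟩ := exists_bmDensity_pos (ι := ι)
  let i : ι := Classical.arbitrary ι
  refine hc.integral_pos_of_hasCompactSupport_nonneg_nonzero
    (x := Pi.single i (√s : ℂ)) ?_ (fun _ => bmDensity_nonneg one_pos _) ?_
  · exact HasCompactSupport.intro (isCompact_setOf_sum_norm_sq_le (0 : ι → ℂ) 1) fun _ hw =>
      bmDensity_eq_zero one_pos (by simpa using hw)
  · have : ∑ k, ‖(Pi.single i (√s : ℂ) : ι → ℂ) k‖ ^ 2 = s := by
      rw [Finset.sum_eq_single i (fun k _ hk => by simp [hk]) (by simp)]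
      simp [Real.sq_sqrt hs]
    rw [this]
    exact hpos.ne'

theorem integral_bmDensity {δ : ℝ} (hδ : 0 < δ) (z : ι → ℂ) :
    ∫ w : ι → ℂ, bmDensity ι δ (∑ k, ‖w k - z k‖ ^ 2) = bmConst ι := by
  classical
  have h := integral_mul_det_dbarMatrix_eq (f := fun _ => 1) isOpen_univ
    (differentiableOn_const 1) (isCompact_setOf_sum_norm_sq_le z (max δ 1)) (subset_univ _)
    (contDiff_bmSection hδ z) (contDiff_bmSection one_pos z)
    (fun w hw => sum_mul_bmSection hδ ((le_max_left _ _).trans (not_le.1 hw).le))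
    (fun w hw => sum_mul_bmSection one_pos ((le_max_right _ _).trans (not_le.1 hw).le))
  simp only [det_dbarMatrix_bmSection hδ, det_dbarMatrix_bmSection one_pos, one_mul,
    integral_complex_ofReal, Complex.ofReal_inj] at h
  rw [h, bmConst]
  exact integral_sub_right_eq_self (fun w : ι → ℂ => bmDensity ι 1 (∑ k, ‖w k‖ ^ 2)) z

/-- The **Cauchy–Fantappiè formula** for smooth sections. -/
theorem integral_mul_det_dbarMatrix [DecidableEq ι] {f : (ι → ℂ) → ℂ} {U K : Set (ι → ℂ)}
    (hU : IsOpen U) (hf : DifferentiableOn ℂ f U) (hK : IsCompact K) (hKU : K ⊆ U) {z : ι → ℂ}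
    (hz : z ∈ interior K) {G : (ι → ℂ) → ι → ℂ} (hG : ContDiff ℝ 2 G)
    (h : ∀ w ∉ K, ∑ i, (w i - z i) * G w i = 1) :
    ∫ w, f w * (dbarMatrix G w).det = bmConst ι * f z := by
  refine eq_of_forall_dist_le fun ε hε => ?_
  have hzU : U ∈ 𝓝 z := hU.mem_nhds (hKU (interior_subset hz))
  have hcont : ContinuousAt f z := hf.continuousOn.continuousAt hzU
  have hη : 0 < ε / bmConst ι := div_pos hε bmConst_pos
  obtain ⟨r, hr, hrK⟩ := Metric.nhds_basis_closedBall.mem_iff.1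
    (inter_mem (mem_interior_iff_mem_nhds.1 hz) (hcont (closedBall_mem_nhds (f z) hη)))
  have hδ : 0 < r ^ 2 := by positivity
  have hsub {w : ι → ℂ} (hw : ∑ k, ‖w k - z k‖ ^ 2 ≤ r ^ 2) :
      w ∈ K ∧ ‖f w - f z‖ ≤ ε / bmConst ι := by
    have := hrK (by simpa [Real.sqrt_sq hr.le] using mem_closedBall_sqrt_of_sum_norm_sq_le hw)
    exact ⟨this.1, by simpa [dist_eq_norm] using this.2⟩
  rw [integral_mul_det_dbarMatrix_eq hU hf hK hKU hG (contDiff_bmSection hδ z) h fun w hw =>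
    sum_mul_bmSection hδ (le_of_lt (not_le.1 fun hle => hw (hsub hle).1))]
  simp only [det_dbarMatrix_bmSection hδ]
  have hD := integrable_bmDensity hδ z
  have hfD := integrable_mul_of_compact_support hU hf.continuousOn
    (Complex.continuous_ofReal.comp (continuous_bmDensity hδ z)) hK hKU fun w hw => by
      have := bmDensity_eq_zero (ι := ι) hδ (not_le.1 fun hle => hw (hsub hle).1)
      simp [this]
  have hcD : Integrable fun w : ι → ℂ =>
      f z * ((bmDensity ι (r ^ 2) (∑ k, ‖w k - z k‖ ^ 2) : ℝ) : ℂ) := hD.ofReal.const_mul _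
  simp only [Function.comp_def] at hfD
  rw [dist_eq_norm, ← integral_bmDensity hδ z, ← integral_complex_ofReal, mul_comm _ (f z),
    ← integral_const_mul, ← integral_sub hfD hcD]
  calc _ ≤ ∫ w : ι → ℂ, ε / bmConst ι * bmDensity ι (r ^ 2) (∑ k, ‖w k - z k‖ ^ 2) := by
        refine norm_integral_le_of_norm_le (hD.const_mul _) (Eventually.of_forall fun w => ?_)
        have hnn := bmDensity_nonneg (ι := ι) hδ (∑ k, ‖w k - z k‖ ^ 2)
        rw [← sub_mul, norm_mul, Complex.norm_real, Real.norm_of_nonneg hnn]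
        rcases le_or_gt (∑ k, ‖w k - z k‖ ^ 2) (r ^ 2) with hle | hgt
        · exact mul_le_mul_of_nonneg_right (hsub hle).2 hnn
        · simp [bmDensity_eq_zero hδ hgt]
    _ = ε := by
        rw [integral_const_mul, integral_bmDensity hδ z, div_mul_cancel₀ _ bmConst_pos.ne']

end CauchyFantappie

section FunctionalCalculus

open WeakDual

open scoped Manifold ContDiff

variable {ι : Type*} [Fintype ι] {A : Type*} [NormedCommRing A] [NormedAlgebra ℂ A]
  [CompleteSpace A]

theorem exists_sum_algebraMap_sub_mul_eq_one (a : ι → A) (w : ι → ℂ)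
    (h : ∀ φ : characterSpace ℂ A, (fun i => φ (a i)) ≠ w) :
    ∃ b : ι → A, ∑ i, (algebraMap ℂ A (w i) - a i) * b i = 1 := by
  by_cases hI : Ideal.span (range fun i => algebraMap ℂ A (w i) - a i) = ⊤
  · obtain ⟨b, hb⟩ := Ideal.mem_span_range_iff_exists_fun.1 ((Ideal.eq_top_iff_one _).1 hI)
    exact ⟨b, by simpa only [mul_comm] using hb⟩
  · obtain ⟨m, hm, hIm⟩ := Ideal.exists_le_maximal _ hI
    refine absurd (funext fun i => ?_) (h m.toCharacterSpace)
    have := m.toCharacterSpace_apply_eq_zero_of_mem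
      (hIm (Ideal.subset_span (mem_range_self (f := fun i => algebraMap ℂ A (w i) - a i) i)))
    rw [map_sub, AlgHomClass.commutes, sub_eq_zero] at this
    exact this.symm

theorem exists_contDiff_sum_algebraMap_sub_mul_eq_one (a : ι → A) {K : Set (ι → ℂ)}
    (h : ∀ w ∉ interior K, ∃ b : ι → A, ∑ i, (algebraMap ℂ A (w i) - a i) * b i = 1) :
    ∃ G : (ι → ℂ) → ι → A, ContDiff ℝ 2 G ∧
      ∀ w ∉ K, ∑ i, (algebraMap ℂ A (w i) - a i) * G w i = 1 := by
  let t (w : ι → ℂ) : Set (ι → A) :=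
    {x | w ∉ K → ∑ i, (algebraMap ℂ A (w i) - a i) * x i = 1}
  have ht (w : ι → ℂ) : Convex ℝ (t w) := by
    intro x hx y hy r s _ _ hrs hw
    simp only [Pi.add_apply, Pi.smul_apply, mul_add, mul_smul_comm, Finset.sum_add_distrib,
      ← Finset.smul_sum, hx hw, hy hw]
    rw [← add_smul, hrs, one_smul]
  have hloc (w₀ : ι → ℂ) : ∃ V ∈ 𝓝 w₀, ∃ g : (ι → ℂ) → ι → A,
      ContMDiffOn 𝓘(ℝ, ι → ℂ) 𝓘(ℝ, ι → A) ((2 : ℕ∞) : WithTop ℕ∞) g V ∧ ∀ w ∈ V, g w ∈ t w := by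
    by_cases hw₀ : w₀ ∈ interior K
    · exact ⟨interior K, isOpen_interior.mem_nhds hw₀, fun _ => 0, contMDiffOn_const,
        fun w hw hwK => absurd (interior_subset hw) hwK⟩
    obtain ⟨b, hb⟩ := h w₀ hw₀
    let u : (ι → ℂ) → A := fun w => ∑ i, (algebraMap ℂ A (w i) - a i) * b i
    have hu : ContDiff ℝ (2 : ℕ∞) u := ContDiff.sum fun i _ =>
      ((((algebraMapCLM ℂ A).restrictScalars ℝ).contDiff.comp (contDiff_apply ℝ ℂ i)).sub
        contDiff_const).mul contDiff_const
    refine ⟨u ⁻¹' {x | IsUnit x}, (Units.isOpen.preimage hu.continuous).mem_nhds ?_,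
      fun w i => b i * Ring.inverse (u w), ContDiffOn.contMDiffOn ?_, ?_⟩
    · change IsUnit (u w₀)
      rw [show u w₀ = 1 from hb]
      exact isUnit_one
    · rintro w ⟨v, hv⟩
      refine ContDiffAt.contDiffWithinAt (contDiffAt_pi.2 fun i => contDiffAt_const.mul ?_)
      exact (hv ▸ contDiffAt_ringInverse ℝ v : ContDiffAt ℝ _ Ring.inverse (u w)).comp w
        hu.contDiffAt
    · intro w hw _
      simp only [← mul_assoc]
      rw [← Finset.sum_mul]
      exact Ring.mul_inverse_cancel _ hw
  obtain ⟨G, hG⟩ := exists_contMDiffMap_forall_mem_convex_of_local 𝓘(ℝ, ι → ℂ) ht hloc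
  exact ⟨G, G.contMDiff.contDiff, fun w hw => hG w hw⟩

/-- Holomorphic functional calculus: a function holomorphic near the joint spectrum of finitely
many elements of a commutative Banach algebra is realised on characters. -/
theorem exists_forall_character_apply_eq [Nonempty ι] (a : ι → A) {f : (ι → ℂ) → ℂ}
    {U : Set (ι → ℂ)} (hU : IsOpen U) (hf : DifferentiableOn ℂ f U)
    (ha : ∀ φ : characterSpace ℂ A, (fun i => φ (a i)) ∈ U) :
    ∃ b : A, ∀ φ : characterSpace ℂ A, φ b = f fun i => φ (a i) := by
  classical
  have hcont : Continuous fun (φ : characterSpace ℂ A) i => φ (a i) :=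
    continuous_pi fun i => (WeakDual.eval_continuous (a i)).comp continuous_subtype_val
  obtain ⟨K, hK, hσK, hKU⟩ := exists_compact_between (isCompact_range hcont) hU
    (range_subset_iff.2 ha)
  obtain ⟨G, hG, hGK⟩ := exists_contDiff_sum_algebraMap_sub_mul_eq_one a (K := K) fun w hw =>
    exists_sum_algebraMap_sub_mul_eq_one a w fun φ hφ => hw (hφ ▸ hσK (mem_range_self φ))
  have hdet : Continuous fun w => (dbarMatrix G w).det := (continuous_dbarMatrix hG).matrix_det
  have hint : IntegrableOn (fun w => f w • (dbarMatrix G w).det) K :=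
    ((hf.continuousOn.mono hKU).smul hdet.continuousOn).integrableOn_compact hK
  refine ⟨((bmConst ι : ℂ))⁻¹ • ∫ w in K, f w • (dbarMatrix G w).det, fun φ => ?_⟩
  let T : A →L[ℂ] ℂ := CharacterSpace.toCLM φ
  let Gφ : (ι → ℂ) → ι → ℂ := fun w i => T (G w i)
  have hGφ : ContDiff ℝ 2 Gφ := contDiff_pi.2 fun i =>
    (T.restrictScalars ℝ).contDiff.comp (contDiff_pi.1 hG i)
  have hrel (w : ι → ℂ) (hw : w ∉ K) : ∑ i, (w i - φ (a i)) * Gφ w i = 1 := by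
    have := congrArg φ (hGK w hw)
    simp only [map_sum, map_mul, map_sub, AlgHomClass.commutes, map_one,
      Algebra.algebraMap_self_apply] at this
    exact this
  have hdetφ (w : ι → ℂ) : T (dbarMatrix G w).det = (dbarMatrix Gφ w).det := by
    have hM : dbarMatrix Gφ w = (CharacterSpace.toAlgHom φ).mapMatrix (dbarMatrix G w) := by
      ext j i
      have hd := hG.differentiable two_ne_zero w
      change dbar j Gφ w i = T (dbar j G w i)
      rw [dbar_pi_apply (hGφ.differentiable two_ne_zero w), dbar_pi_apply hd,
        ← dbar_clm_comp T (differentiableAt_pi.1 hd i)]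
    rw [hM, ← AlgHom.map_det]
    rfl
  have hint' : T (∫ w in K, f w • (dbarMatrix G w).det) = ∫ w, f w * (dbarMatrix Gφ w).det := by
    rw [← T.integral_comp_comm hint]
    simp only [map_smul, hdetφ, smul_eq_mul]
    refine setIntegral_eq_integral_of_forall_compl_eq_zero fun w hw => ?_
    rw [det_dbarMatrix_eq_zero hGφ (z := fun i => φ (a i)), mul_zero]
    filter_upwards [hK.isClosed.isOpen_compl.mem_nhds hw] with x hx using hrel x hx
  change T _ = _
  rw [map_smul, hint', integral_mul_det_dbarMatrix hU hf hK hKU (hσK (mem_range_self φ)) hGφ hrel,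
    smul_eq_mul, inv_mul_cancel_left₀]
  exact_mod_cast bmConst_pos.ne'

end FunctionalCalculus

section OkaWeil

open WeakDual

variable {ι : Type*} [Fintype ι]

/-- The **Oka–Weil theorem**: functions holomorphic near a polynomially convex compact set are
uniform limits of polynomials on it. -/
theorem oka_weil {L U : Set (ι → ℂ)} (hL : IsCompact L)
    (hconv : ∀ z, (∀ (p : MvPolynomial ι ℂ) (C : ℝ), 0 ≤ C → (∀ w ∈ L, ‖eval w p‖ ≤ C) →
      ‖eval z p‖ ≤ C) → z ∈ L)
    (hU : IsOpen U) (hLU : L ⊆ U) {f : (ι → ℂ) → ℂ} (hf : DifferentiableOn ℂ f U)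
    {ε : ℝ} (hε : 0 < ε) : ∃ p : MvPolynomial ι ℂ, ∀ z ∈ L, ‖eval z p - f z‖ < ε := by
  rcases isEmpty_or_nonempty ι with hι | hι
  · exact ⟨MvPolynomial.C (f default), fun z _ => by simp [Subsingleton.elim z default, hε]⟩
  have : CompactSpace L := isCompact_iff_compactSpace.1 hL
  let coord (i : ι) : C(L, ℂ) := ⟨fun z => z.1 i, (continuous_apply i).comp continuous_subtype_val⟩
  let Φ : MvPolynomial ι ℂ →ₐ[ℂ] C(L, ℂ) := aeval coord
  have hΦ (p : MvPolynomial ι ℂ) (z : L) : Φ p z = eval z.1 p := by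
    have h := MvPolynomial.comp_aeval_apply coord (ContinuousMap.evalAlgHom ℂ ℂ z) p
    rw [← coe_aeval_eq_eval]
    exact h
  let A : Subalgebra ℂ C(L, ℂ) := Φ.range.topologicalClosure
  have : CompleteSpace A := Φ.range.isClosed_topologicalClosure.completeSpace_coe
  let a (i : ι) : A :=
    ⟨coord i, Φ.range.le_topologicalClosure ⟨MvPolynomial.X i, aeval_X coord i⟩⟩
  have ha (φ : characterSpace ℂ A) : (fun i => φ (a i)) ∈ L := by
    refine hconv _ fun p C hC hpC => ?_
    have h1 : φ (aeval a p) = eval (fun i => φ (a i)) p := by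
      have h := MvPolynomial.comp_aeval_apply a (CharacterSpace.toAlgHom φ) p
      rw [← coe_aeval_eq_eval]
      exact h
    have h2 : ((aeval a p : A) : C(L, ℂ)) = Φ p := MvPolynomial.comp_aeval_apply a A.val p
    have h3 : ‖(1 : A)‖ ≤ 1 := (ContinuousMap.norm_le _ zero_le_one).2 fun _ => by simp
    have h4 : ‖aeval a p‖ ≤ C := by
      change ‖((aeval a p : A) : C(L, ℂ))‖ ≤ C
      rw [h2, ContinuousMap.norm_le _ hC]
      exact fun z => hΦ p z ▸ hpC z z.2
    rw [← h1]
    exact (AlgHom.norm_apply_le_self_mul_norm_one φ _).trans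
      ((mul_le_mul h4 h3 (norm_nonneg _) hC).trans_eq (mul_one C))
  obtain ⟨b, hb⟩ := exists_forall_character_apply_eq a hU hf fun φ => hLU (ha φ)
  obtain ⟨_, ⟨p, rfl⟩, hp⟩ := Metric.mem_closure_iff.1 b.2 ε hε
  refine ⟨p, fun z hz => ?_⟩
  have hbz : (b : C(L, ℂ)) ⟨z, hz⟩ = f z :=
    hb (CharacterSpace.equivAlgHom.symm ((ContinuousMap.evalAlgHom ℂ ℂ (⟨z, hz⟩ : L)).comp A.val))
  rw [← hbz, ← dist_eq_norm, dist_comm, ← hΦ p ⟨z, hz⟩]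
  exact (ContinuousMap.dist_apply_le_dist _).trans_lt hp

end OkaWeil

section PolynomialConvexity

variable {N n : ℕ}

theorem bddAbove_norm_eval_image {L : Set (EuclideanSpace ℂ (Fin N))} (hL : IsCompact L)
    (p : MvPolynomial (Fin N) ℂ) : BddAbove ((fun w => ‖eval (fun i => w i) p‖) '' L) :=
  (hL.image (p.continuous_eval.comp (PiLp.continuous_ofLp 2 _)).norm).bddAbove

theorem sSup_norm_image_nonneg {X : Type*} (g : X → ℂ) (s : Set X) :
    0 ≤ sSup ((fun x => ‖g x‖) '' s) :=
  Real.sSup_nonneg (forall_mem_image.2 fun _ _ => norm_nonneg _)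

theorem IsPolyConvex.exists_forall_norm_eval_sub_lt {L U : Set (EuclideanSpace ℂ (Fin N))}
    (hL : IsCompact L) (hconv : IsPolyConvex L) (hU : IsOpen U) (hLU : L ⊆ U)
    {g : EuclideanSpace ℂ (Fin N) → ℂ} (hg : DifferentiableOn ℂ g U) {ε : ℝ} (hε : 0 < ε) :
    ∃ p : MvPolynomial (Fin N) ℂ, ∀ z ∈ L, ‖eval (fun i => z i) p - g z‖ < ε := by
  let e := EuclideanSpace.equiv (Fin N) ℂ
  have hhull (z : Fin N → ℂ) (hz : ∀ (p : MvPolynomial (Fin N) ℂ) (C : ℝ), 0 ≤ C →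
      (∀ w ∈ e '' L, ‖eval w p‖ ≤ C) → ‖eval z p‖ ≤ C) : z ∈ e '' L := by
    refine ⟨e.symm z, ?_, e.apply_symm_apply z⟩
    rw [← show polyHull L = L from hconv]
    refine fun p => hz p _ (sSup_norm_image_nonneg _ L) (forall_mem_image.2 fun w hw => ?_)
    exact le_csSup (bddAbove_norm_eval_image hL p) (mem_image_of_mem _ hw)
  obtain ⟨p, hp⟩ := oka_weil (U := e.symm ⁻¹' U) (f := g ∘ e.symm) (hL.image e.continuous) hhull
    (hU.preimage e.symm.continuous) (image_subset_iff.2 fun w hw => by simpa using hLU hw)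
    (hg.comp e.symm.differentiable.differentiableOn fun _ h => h) hε
  exact ⟨p, fun z hz => hp (e z) (mem_image_of_mem e hz)⟩

theorem norm_eval_le_of_mem_polyHull2
    {S : Set (EuclideanSpace ℂ (Fin N) × EuclideanSpace ℂ (Fin n))}
    {s : EuclideanSpace ℂ (Fin N) × EuclideanSpace ℂ (Fin n)} (hs : s ∈ polyHull2 S)
    (p : MvPolynomial (Fin N ⊕ Fin n) ℂ) {C : ℝ} (hC : 0 ≤ C)
    (hp : ∀ w ∈ S, ‖eval (Sum.elim (fun i => w.1 i) (fun j => w.2 j)) p‖ ≤ C) :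
    ‖eval (Sum.elim (fun i => s.1 i) (fun j => s.2 j)) p‖ ≤ C :=
  (hs p).trans (Real.sSup_le (forall_mem_image.2 hp) hC)

theorem subset_polyHull2 {S : Set (EuclideanSpace ℂ (Fin N) × EuclideanSpace ℂ (Fin n))}
    (hS : IsCompact S) : S ⊆ polyHull2 S := by
  intro s hs p
  have hc : Continuous fun w : EuclideanSpace ℂ (Fin N) × EuclideanSpace ℂ (Fin n) =>
      ‖eval (Sum.elim (fun i => w.1 i) (fun j => w.2 j)) p‖ := by
    refine (p.continuous_eval.comp (continuous_pi ?_)).norm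
    rintro (i | j)
    · exact ((EuclideanSpace.proj (𝕜 := ℂ) i).continuous).comp continuous_fst
    · exact ((EuclideanSpace.proj (𝕜 := ℂ) j).continuous).comp continuous_snd
  exact le_csSup (hS.image hc).bddAbove (mem_image_of_mem _ hs)

theorem eval_aeval_X_add_rename (p : MvPolynomial (Fin n) ℂ) (q : Fin n → MvPolynomial (Fin N) ℂ)
    (x : Fin N → ℂ) (y : Fin n → ℂ) :
    eval (Sum.elim x y) (aeval (fun j => X (Sum.inr j) + rename Sum.inl (q j)) p) =
      eval (fun j => y j + eval x (q j)) p := by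
  rw [← coe_aeval_eq_eval, ← coe_aeval_eq_eval]
  refine (MvPolynomial.comp_aeval_apply _ (aeval (Sum.elim x y)) p).trans ?_
  simp [eval_rename, aeval_eq_eval]

end PolynomialConvexity

/-- Let `L ⊆ ℂᴺ` and `K ⊆ ℂⁿ` be compact polynomially convex sets, `U` an open neighbourhood of
`L`, and `f : U → ℂⁿ` a holomorphic map with `f(z) ∉ K` for all `z ∈ L`. Then the set
`S = {(z, ζ − f(z)) : z ∈ L, ζ ∈ K} ⊆ ℂ^{N+n}` is polynomially convex and disjoint from
`ℂᴺ × {0}`. -/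
theorem stmt_4 (N n : ℕ) (L : Set (EuclideanSpace ℂ (Fin N))) (K : Set (EuclideanSpace ℂ (Fin n)))
    (hLc : IsCompact L) (hLpc : IsPolyConvex L) (hKc : IsCompact K) (hKpc : IsPolyConvex K)
    (U : Set (EuclideanSpace ℂ (Fin N))) (hU : IsOpen U) (hLU : L ⊆ U)
    (f : EuclideanSpace ℂ (Fin N) → EuclideanSpace ℂ (Fin n))
    (hf : DifferentiableOn ℂ f U) (hfK : ∀ z ∈ L, f z ∉ K) :
    IsPolyConvex2 ((fun p : EuclideanSpace ℂ (Fin N) × EuclideanSpace ℂ (Fin n) =>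
        (p.1, p.2 - f p.1)) '' (L ×ˢ K)) ∧
      ∀ q ∈ (fun p : EuclideanSpace ℂ (Fin N) × EuclideanSpace ℂ (Fin n) =>
        (p.1, p.2 - f p.1)) '' (L ×ˢ K), q.2 ≠ 0 := by
  constructor
  · have hfc : ContinuousOn (fun p : EuclideanSpace ℂ (Fin N) × EuclideanSpace ℂ (Fin n) =>
        (p.1, p.2 - f p.1)) (L ×ˢ K) := continuousOn_fst.prodMk <| continuousOn_snd.sub <|
      (hf.continuousOn.mono hLU).comp continuousOn_fst fun p hp => hp.1
    refine Subset.antisymm ?_ (subset_polyHull2 ((hLc.prod hKc).image_of_continuousOn hfc))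
    rintro ⟨z₀, w₀⟩ h₀
    have hz₀ : z₀ ∈ L := by
      rw [← show polyHull L = L from hLpc]
      intro p
      have := norm_eval_le_of_mem_polyHull2 h₀ (rename Sum.inl p)
        (sSup_norm_image_nonneg (fun w => eval (fun i => w i) p) L)
        (forall_mem_image.2 fun q hq => by
          simpa [eval_rename, Function.comp_def] using
            le_csSup (bddAbove_norm_eval_image hLc p) (mem_image_of_mem _ hq.1))
      simpa [eval_rename, Function.comp_def] using this
    refine ⟨(z₀, w₀ + f z₀), ⟨hz₀, ?_⟩, by simp⟩
    change w₀ + f z₀ ∈ K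
    rw [← show polyHull K = K from hKpc]
    refine fun p => le_of_forall_pos_le_add fun ε hε => ?_
    obtain ⟨δ, hδ, hpδ⟩ := Metric.mem_uniformity_dist.1
      (IsCompact.uniformContinuousAt_of_continuousAt
        ((hKc.insert (w₀ + f z₀)).image (PiLp.continuous_ofLp 2 _)) (fun x => eval x p)
        (fun _ _ => p.continuous_eval.continuousAt)
        (Metric.dist_mem_uniformity (half_pos hε)))
    have hq (j : Fin n) := hLpc.exists_forall_norm_eval_sub_lt hLc hU hLU
      ((EuclideanSpace.proj (𝕜 := ℂ) j).differentiable.comp_differentiableOn hf) hδ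
    choose q hq using hq
    have hclose {z : EuclideanSpace ℂ (Fin N)} {w : EuclideanSpace ℂ (Fin n)} (hz : z ∈ L)
        (hw : w + f z ∈ insert (w₀ + f z₀) K) :
        ‖eval (fun j => (w + f z) j) p - eval (Sum.elim (fun i => z i) (fun j => w j))
          (aeval (fun j => X (Sum.inr j) + rename Sum.inl (q j)) p)‖ < ε / 2 := by
      rw [eval_aeval_X_add_rename, ← dist_eq_norm]
      refine hpδ ?_ (mem_image_of_mem _ hw)
      rw [dist_pi_lt_iff hδ]
      intro j
      rw [dist_comm, dist_eq_norm]
      simpa using hq j z hz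
    have hS := norm_eval_le_of_mem_polyHull2 h₀
      (aeval (fun j => X (Sum.inr j) + rename Sum.inl (q j)) p)
      (add_nonneg (sSup_norm_image_nonneg (fun w => eval (fun i => w i) p) K) (half_pos hε).le)
      (forall_mem_image.2 fun s hs => by
        have h1 := hclose (w := s.2 - f s.1) hs.1 (by simpa using Or.inr hs.2)
        rw [sub_add_cancel] at h1
        have h2 := le_csSup (bddAbove_norm_eval_image hKc p) (mem_image_of_mem _ hs.2)
        have h3 := norm_sub_norm_le (eval (Sum.elim (fun i => s.1 i) (fun j => (s.2 - f s.1) j))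
          (aeval (fun j => X (Sum.inr j) + rename Sum.inl (q j)) p)) (eval (fun j => s.2 j) p)
        rw [norm_sub_rev] at h3
        dsimp only at h2 ⊢
        linarith)
    have h1 := hclose hz₀ (mem_insert _ K)
    have h2 := norm_sub_norm_le (eval (fun j => (w₀ + f z₀) j) p) (eval (Sum.elim (fun i => z₀ i)
      (fun j => w₀ j)) (aeval (fun j => X (Sum.inr j) + rename Sum.inl (q j)) p))
    linarith
  · rintro _ ⟨⟨z, ζ⟩, ⟨hz, hζ⟩, rfl⟩ h
    exact hfK z hz (sub_eq_zero.1 h ▸ hζ)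
end
end
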